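/- arXiv:1503.00918 — 2 statements merged into one kernel-verified Lean document; each statement's English description precedes it below -/
import Mathlib

section
/- Let α, β ∈ K, n ≥ 2, m > n, and let P = {a_1, …, a_m} be m points ordered anticlockwise on a circle; equip the total fraction ring Q_n(P) of the rank n swapping ring with the (β−α, α+β)-swapping bracket. For indices 1 ≤ i, i' ≤ n < j, j' ≤ m, define s_=(a_i, a_j, a_{i'}, a_{j'}) to be 1 if a_i ≺ a_{i'} ≺ a_{j'} ≺ a_j; −1 if a_{i'} ≺ a_i ≺ a_j ≺ a_{j'}; 1/2 if a_i = a_{i'} ≺ a_{j'} ≺ a_j or a_i ≺ a_{i'} ≺ a_{j'} = a_j; −1/2 if a_{i'} = a_i ≺ a_j ≺ a_{j'} or a_{i'} ≺ a_i ≺ a_j = a_{j'}; and 0 otherwise. On the polynomial ring K[m_{ij} : 1 ≤ i ≤ n < j ≤ m] define the bracket {m_{ij}, m_{i'j'}}_{B_{α,β}} = (α−β)·s_=(a_i, a_j, a_{i'}, a_{j'})·m_{ij'}·m_{i'j} + (α+β)·J(a_i a_j, a_{i'} a_{j'})·m_{ij}·m_{i'j'}, where J is the linking number. Then the algebra homomorphism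 θ sending m_{ij} to the determinant quotient E(a_1, …, a_{i−1}, a_{i+1}, …, a_n | a_j, a_i) ∈ Q_n(P) is injective and is Poisson with respect to {·,·}_{B_{α,β}} and the (β−α, α+β)-swapping bracket. -/
noncomputable section

open scoped Classical
open MvPolynomial

set_option maxHeartbeats 1000000
set_option synthInstance.maxHeartbeats 400000

instance fact01 : Fact ((0:ℝ) < 1) := ⟨one_pos⟩

/-- The circle, modelled as `ℝ/ℤ`. -/
abbrev Circle1 : Type := AddCircle (1:ℝ)

/-- The coordinate in `[0,1)` of the point `x` of the circle obtained after removing the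
point `o` and identifying the complement of `o` with an interval. -/
def coordAt (o x : Circle1) : ℝ := ((AddCircle.equivIco 1 0) (x - o) : ℝ)

/-- The sign `△` of a real number, as a rational number in `{-1, 0, 1}`. -/
def sgnQ (a : ℝ) : ℚ := if a < 0 then -1 else if a = 0 then 0 else 1

/-- The linking number `J(rx, sy)` of the chords `rx` and `sy`, computed using the
cut point `o`. -/
def linkingAt (o r x s y : Circle1) : ℚ :=
  (1/2) * (sgnQ (coordAt o r - coordAt o x) * sgnQ (coordAt o r - coordAt o y)
        * sgnQ (coordAt o y - coordAt o x)
      - sgnQ (coordAt o r - coordAt o x) * sgnQ (coordAt o r - coordAt o s)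
        * sgnQ (coordAt o s - coordAt o x))

lemma circle1_infinite : Infinite Circle1 := by
  have h : (Set.Ico (0:ℝ) (0+1)).Infinite := Set.Ico_infinite (by norm_num)
  haveI := h.to_subtype
  exact Infinite.of_injective (fun q : Set.Ico (0:ℝ) (0+1) => (AddCircle.equivIco 1 0).symm q)
    ((AddCircle.equivIco 1 0).symm.injective)

lemma exists_cut (r x s y : Circle1) :
    ∃ o : Circle1, o ≠ r ∧ o ≠ x ∧ o ≠ s ∧ o ≠ y := by
  haveI : Infinite Circle1 := circle1_infinite
  have hfin : ({r, x, s, y} : Set Circle1).Finite :=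
    (((Set.finite_singleton y).insert s).insert x).insert r
  obtain ⟨o, ho⟩ := hfin.infinite_compl.nonempty
  simp only [Set.mem_compl_iff, Set.mem_insert_iff, Set.mem_singleton_iff, not_or] at ho
  exact ⟨o, ho.1, ho.2.1, ho.2.2.1, ho.2.2.2⟩

/-- The linking number `J(rx, sy)` of the chords `rx` and `sy` (computed with respect to
some cut point distinct from the four points; by the independence of the choice this is
the linking number). -/
def linkQ (r x s y : Circle1) : ℚ := linkingAt (exists_cut r x s y).choose r x s y

/-- The set of points of the circle `l`, listed in anticlockwise (cyclic) order:
there is a cut point `o` avoiding them such that the induced coordinates are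
strictly increasing along the list. -/
def AnticlockwiseList (l : List Circle1) : Prop :=
  ∃ o : Circle1, (∀ p ∈ l, p ≠ o) ∧ (l.map (coordAt o)).Chain' (· < ·)

/-- Index type for the generators `xy` of the swapping ring of `P`
(one generator for each ordered pair of distinct points; the generators `xx`
are identified with `0`). -/
abbrev SwapIdx (P : Set Circle1) : Type := {q : (↥P) × (↥P) // q.1 ≠ q.2}

/-- The swapping ring `Z(P)`: the polynomial ring over `K` on the generators `xy`,
`x ≠ y ∈ P` (this realizes the commutative ring generated by all ordered pairs `xy`
subject to the relations `xx = 0`). -/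
abbrev SwapRing (K : Type) [Field K] (P : Set Circle1) : Type := MvPolynomial (SwapIdx P) K

/-- The generator `xy` of the swapping ring (equal to `0` when `x = y`). -/
def gen (K : Type) [Field K] (P : Set Circle1) (x y : ↥P) : SwapRing K P :=
  if h : x ≠ y then MvPolynomial.X (⟨(x, y), h⟩ : SwapIdx P) else 0

/-- The value of the `(c1,c2)`-swapping bracket on two generators `rx` and `sy`:
`J(rx,sy) • (c1 • ry·sx + c2 • rx·sy)`. -/
def genBr (K : Type) [Field K] (P : Set Circle1) (c1 c2 : K) (g g' : SwapIdx P) :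
    SwapRing K P :=
  ((linkQ g.1.1.1 g.1.2.1 g'.1.1.1 g'.1.2.1 : ℚ) : K) •
    (c1 • (gen K P g.1.1 g'.1.2 * gen K P g'.1.1 g.1.2)
      + c2 • (gen K P g.1.1 g.1.2 * gen K P g'.1.1 g'.1.2))

/-- The `(c1,c2)`-swapping bracket on `Z(P)`: the biderivation extending
`{rx, sy} = J(rx,sy)·(c1·ry·sx + c2·rx·sy)` by the Leibniz rule in each argument.
The swapping bracket is the case `c1 = 1, c2 = 0`. -/
def swapBr (K : Type) [Field K] (P : Set Circle1) (c1 c2 : K) (a b : SwapRing K P) :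
    SwapRing K P :=
  (MvPolynomial.mkDerivation K
    (fun g : SwapIdx P => (MvPolynomial.mkDerivation K (genBr K P c1 c2 g)) b)) a

/-- `Δ((x_1,…,x_m),(y_1,…,y_m)) = det (x_i y_j)` in the swapping ring. -/
def Dmat (K : Type) [Field K] (P : Set Circle1) (m : ℕ) (xs ys : Fin m → ↥P) :
    SwapRing K P :=
  Matrix.det (Matrix.of fun i j => gen K P (xs i) (ys j))

/-- The ideal `R_n(P)` of `Z(P)` generated by all `(n+1)×(n+1)` determinants
`Δ((x_1,…,x_{n+1}),(y_1,…,y_{n+1}))`. -/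
def Rideal (K : Type) [Field K] (P : Set Circle1) (n : ℕ) : Ideal (SwapRing K P) :=
  Ideal.span {D : SwapRing K P | ∃ xs ys : Fin (n+1) → ↥P, D = Dmat K P (n+1) xs ys}

/-- The rank `n` swapping ring `Z_n(P) = Z(P)/R_n(P)`. -/
abbrev ZnRing (K : Type) [Field K] (P : Set Circle1) (n : ℕ) : Type :=
  SwapRing K P ⧸ Rideal K P n

/-- The quotient map `Z(P) → Z_n(P)`. -/
def toZn (K : Type) [Field K] (P : Set Circle1) (n : ℕ) :
    SwapRing K P →+* ZnRing K P n := Ideal.Quotient.mk (Rideal K P n)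

/-- The total fraction ring `Q_n(P)` of the rank `n` swapping ring. -/
abbrev QnRing (K : Type) [Field K] (P : Set Circle1) (n : ℕ) : Type :=
  Localization (nonZeroDivisors (ZnRing K P n))

/-- The canonical map `Z(P) → Q_n(P)`. -/
def toQn (K : Type) [Field K] (P : Set Circle1) (n : ℕ) :
    SwapRing K P →+* QnRing K P n :=
  (algebraMap (ZnRing K P n) (QnRing K P n)).comp (toZn K P n)

/-- `Bq` is the extension to the total fraction ring `Q_n(P)` of the `(c1,c2)`-swapping
bracket of the rank `n` swapping algebra: it agrees with the swapping bracket on the image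
of `Z(P)` and satisfies the Leibniz rule in both arguments (these properties determine it
uniquely). -/
def IsQnBracket (K : Type) [Field K] (P : Set Circle1) (n : ℕ) (c1 c2 : K)
    (Bq : QnRing K P n → QnRing K P n → QnRing K P n) : Prop :=
  (∀ a b : SwapRing K P,
      Bq (toQn K P n a) (toQn K P n b) = toQn K P n (swapBr K P c1 c2 a b)) ∧
  (∀ a b c : QnRing K P n, Bq (a * b) c = a * Bq b c + b * Bq a c) ∧
  (∀ a b c : QnRing K P n, Bq a (b * c) = b * Bq a c + c * Bq a b)

/-- The `n`-tuple `(x_1, …, x_a, y_1, …, y_b, z_1, …, z_{n-a-b})` built from three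
families of points (families are indexed from `0`, i.e. `x 0 = x_1`). -/
def rows3 {α : Type*} {n : ℕ} (x y z : ℕ → α) (a b : ℕ) : Fin n → α :=
  fun i => if (i : ℕ) < a then x (i : ℕ)
    else if (i : ℕ) < a + b then y ((i : ℕ) - a)
    else z ((i : ℕ) - (a + b))

/-- The `n`-tuple `(x_1, …, x_a, y_1, …, y_b, z_1, …, z_{n-1-a-b}, w)` built from three
families of points and a final point `w`. -/
def rows3s {α : Type*} {n : ℕ} (x y z : ℕ → α) (a b : ℕ) (w : α) : Fin n → α :=
  fun i => if (i : ℕ) < a then x (i : ℕ)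
    else if (i : ℕ) < a + b then y ((i : ℕ) - a)
    else if (i : ℕ) < n - 1 then z ((i : ℕ) - (a + b))
    else w

/-- The `n`-tuple `(x_1, …, x_{n-1}, t)`. -/
def snocTup {α : Type*} {n : ℕ} (x : ℕ → α) (t : α) : Fin n → α :=
  fun i => if (i : ℕ) < n - 1 then x (i : ℕ) else t

/-- The list `f_a, f_{a-1}, …, f_1` (descending enumeration). -/
def descPts (f : ℕ → Circle1) (a : ℕ) : List Circle1 := ((List.range a).map f).reverse

/-- The list `f_1, f_2, …, f_a` (ascending enumeration). -/
def ascPts (f : ℕ → Circle1) (a : ℕ) : List Circle1 := (List.range a).map f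

/-- The `(n×n)`-determinant quotient `Δ(numR, v)/Δ(denR, v)` as an element of the total
fraction ring `Q_n(P)`. -/
def EQuot (K : Type) [Field K] (P : Set Circle1) (n : ℕ)
    (numR denR v : Fin n → ↥P)
    (h : toZn K P n (Dmat K P n denR v) ∈ nonZeroDivisors (ZnRing K P n)) :
    QnRing K P n :=
  Localization.mk (toZn K P n (Dmat K P n numR v)) ⟨toZn K P n (Dmat K P n denR v), h⟩


/-- `s_=(a_i, a_j, a_{i'}, a_{j'})` expressed through the indices, for points
`a_1 ≺ a_2 ≺ … ≺ a_m` ordered anticlockwise with `i, i' ≤ n < j, j'`: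
it is `1` if `a_i ≺ a_{i'} ≺ a_{j'} ≺ a_j`, `-1` if `a_{i'} ≺ a_i ≺ a_j ≺ a_{j'}`,
`1/2` if `a_i = a_{i'} ≺ a_{j'} ≺ a_j` or `a_i ≺ a_{i'} ≺ a_{j'} = a_j`,
`-1/2` if `a_{i'} = a_i ≺ a_j ≺ a_{j'}` or `a_{i'} ≺ a_i ≺ a_j = a_{j'}`, and `0`
otherwise. -/
def sEq (i j i' j' : ℕ) : ℚ :=
  if i < i' ∧ j' < j then 1
  else if i' < i ∧ j < j' then -1
  else if (i = i' ∧ j' < j) ∨ (i < i' ∧ j' = j) then 1/2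
  else if (i = i' ∧ j < j') ∨ (i' < i ∧ j = j') then -1/2
  else 0

/-- Index type for the coordinates `m_{ij}`, `1 ≤ i ≤ n < j ≤ m`, on the cell of the
Grassmannian `G_{n,m}`. -/
abbrev GIdx (m n : ℕ) : Type := {ij : ℕ × ℕ // 1 ≤ ij.1 ∧ ij.1 ≤ n ∧ n < ij.2 ∧ ij.2 ≤ m}

/-- The value of the bracket `{·,·}_{B_{α,β}}` on two coordinate functions:
`{m_{ij}, m_{i'j'}} = (α-β)·s_=(a_i,a_j,a_{i'},a_{j'})·m_{ij'}·m_{i'j}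
  + (α+β)·J(a_i a_j, a_{i'} a_{j'})·m_{ij}·m_{i'j'}`. -/
def genG (K : Type) [Field K] (m n : ℕ) (al be : K) (a : ℕ → Circle1)
    (g g' : GIdx m n) : MvPolynomial (GIdx m n) K :=
  ((al - be) * ((sEq g.1.1 g.1.2 g'.1.1 g'.1.2 : ℚ) : K)) •
    (MvPolynomial.X (⟨(g.1.1, g'.1.2), g.2.1, g.2.2.1, g'.2.2.2.1, g'.2.2.2.2⟩ : GIdx m n)
      * MvPolynomial.X (⟨(g'.1.1, g.1.2), g'.2.1, g'.2.2.1, g.2.2.2.1, g.2.2.2.2⟩ : GIdx m n))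
  + ((al + be) * ((linkQ (a g.1.1) (a g.1.2) (a g'.1.1) (a g'.1.2) : ℚ) : K)) •
      (MvPolynomial.X g * MvPolynomial.X g')

/-- The bracket `{·,·}_{B_{α,β}}` on the polynomial ring `K[m_{ij}]`, extended from the
coordinate functions by the Leibniz rule in each argument. -/
def brG (K : Type) [Field K] (m n : ℕ) (al be : K) (a : ℕ → Circle1)
    (f h : MvPolynomial (GIdx m n) K) : MvPolynomial (GIdx m n) K :=
  (MvPolynomial.mkDerivation K
    (fun g : GIdx m n => (MvPolynomial.mkDerivation K (genG K m n al be a g)) h)) f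

/-- The point `a_k` as an element of `P = {a_1, …, a_m}`. -/
def mkP (m : ℕ) (a : ℕ → Circle1) (k : ℕ) (h1 : 1 ≤ k) (h2 : k ≤ m) :
    ↥(a '' Set.Icc 1 m) := ⟨a k, ⟨k, Set.mem_Icc.mpr ⟨h1, h2⟩, rfl⟩⟩

/-- The `n`-tuple `(a_1, …, a_{i-1}, a_{i+1}, …, a_n, a_last)` (the hat tuple `â_i`
followed by a final point `a_last`). -/
def hatRows (m n : ℕ) (a : ℕ → Circle1) (i last : ℕ) (hnm : n < m) (hi : i ≤ n)
    (h1 : 1 ≤ last) (h2 : last ≤ m) : Fin n → ↥(a '' Set.Icc 1 m) :=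
  fun k => if hk : (k : ℕ) < n - 1 then
      (if (k : ℕ) + 1 < i then mkP m a ((k : ℕ) + 1) (by omega) (by omega)
        else mkP m a ((k : ℕ) + 2) (by omega) (by omega))
    else mkP m a last h1 h2

/-- The right-side `n`-tuple `(a_1, …, a_n)` used to represent the determinant
quotients. -/
def vTup (m n : ℕ) (a : ℕ → Circle1) (hnm : n ≤ m) : Fin n → ↥(a '' Set.Icc 1 m) :=
  fun k => mkP m a ((k : ℕ) + 1) (by omega) (by have := k.isLt; omega)

/-!
Write `x p q` for the image in `Q_n(P)` of the generator `pq`. As all `(n + 1)`-minors of `x`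
vanish, the row of `a_j` is a combination of the rows of `a_1, …, a_n`, and by Cramer's rule the
coefficient of the row of `a_i` is `θ(m_{ij})`. The linking number is a sum of signs attached to
pairs of end points. In the bracket of two such linear relations the signs attached to a column
cancel, and the remaining ones are those of `B_{α,β}`.

Cramer's rule needs `Δ((a_1, …, a_n), (a_1, …, a_n))` to be invertible in `Q_n(P)`, which holds
because `R_n(P)` is prime. Indeed the `(n + 1)`-minors of a generic matrix generate the kernel of
the map that substitutes a product of generic matrices with inner dimension `n` (the second
fundamental theorem of invariant theory for `GL_n`). Orthogonal projection for the Fischer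
inner product shows that this description survives imposing the relations `pp = 0`. After the
substitution these relations become one quadric `∑ k, u k * v k` for each point, in separate sets
of variables, and they generate a prime ideal as soon as `n ≥ 2`.

For injectivity, evaluating `Z(P)` at the generic point of the big cell of the Grassmannian, with
covectors annihilating the vectors, inverts `θ` up to powers of that determinant.
-/

namespace Swapping

section Tables

/-- The mass of the table `ν` on the up-set of `x`. Tables with equal margins are compared through
these numbers. -/
def upperSum {α : Type*} [Fintype α] [Preorder α] (ν : α → ℕ) (x : α) : ℕ :=
  ∑ y with x ≤ y, ν y

/-- Both coordinates increase strictly: the relation between successive entries of the main diagonal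
of a minor. -/
def DiagLT {ι κ : Type*} [LT ι] [LT κ] (x y : ι × κ) : Prop :=
  x.1 < y.1 ∧ x.2 < y.2

/-- The number of elements below `x`. -/
def downCard {α : Type*} [Fintype α] [Preorder α] (x : α) : ℕ :=
  Finset.card {y | y ≤ x}

/-- The weight of an exponent in which `x` counts with the size of its down-set. -/
def rankWeight {α : Type*} [Fintype α] [Preorder α] : (α →₀ ℕ) →+ ℕ :=
  Finsupp.weight downCard

variable {α ι κ : Type*} [Fintype α] [Fintype ι] [Fintype κ]

lemma eq_of_upperSum_eq [PartialOrder α] {ν μ : α → ℕ} (h : ∀ x, upperSum ν x = upperSum μ x) :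
    ν = μ := by
  have split_off (ξ : α → ℕ) (x : α) : upperSum ξ x = ξ x + ∑ y with x < y, ξ y := by
    have hIci : ({y | x ≤ y} : Finset α) = insert x ({y | x < y} : Finset α) := by
      ext y
      simp [le_iff_eq_or_lt, eq_comm]
    rw [upperSum, hIci, Finset.sum_insert (by simp)]
  funext x
  induction x using WellFoundedGT.induction with
  | _ x ih =>
    have habove : ∑ y with x < y, ν y = ∑ y with x < y, μ y :=
      Finset.sum_congr rfl fun y hy => ih y (Finset.mem_filter.mp hy).2
    have := h x
    rw [split_off, split_off, habove] at this
    exact Nat.add_right_cancel this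

lemma rankWeight_eq_sum_upperSum [Preorder α] (ν : α →₀ ℕ) :
    rankWeight ν = ∑ x, upperSum ν x := by
  simp only [rankWeight, downCard, Finsupp.weight_eq_sum, upperSum, Finset.card_filter,
    smul_eq_mul, Finset.mul_sum, Finset.sum_filter, mul_ite, mul_one, mul_zero]
  exact Finset.sum_comm

lemma rankWeight_single [Preorder ι] [Preorder κ] (x : ι × κ) :
    rankWeight (Finsupp.single x 1) = downCard x.1 * downCard x.2 := by
  rw [rankWeight, Finsupp.weight_single, one_smul, downCard, downCard, downCard,
    ← Finset.card_product]
  congr 1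
  ext y
  simp [Prod.le_def]

lemma downCard_strictMono [Preorder α] : StrictMono (downCard : α → ℕ) := by
  intro x y hxy
  refine Finset.card_lt_card ((Finset.ssubset_iff_of_subset ?_).mpr ⟨y, by simp, ?_⟩)
  · exact Finset.monotone_filter_right _ fun z _ hz => hz.trans hxy.le
  · simpa using hxy.not_ge

variable [LinearOrder ι] [LinearOrder κ]

-- Inclusion–exclusion over the two half-planes `s ≤ p` and `t ≤ q`.
lemma upperSum_add_sum (u : ι × κ → ℕ) (s : ι) (t : κ) :
    upperSum u (s, t) + ∑ x, u x =
      (∑ p with s ≤ p, ∑ q, u (p, q)) + (∑ q with t ≤ q, ∑ p, u (p, q))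
        + ∑ x with DiagLT x (s, t), u x := by
  have hrows : ∑ p with s ≤ p, ∑ q, u (p, q) = ∑ x : ι × κ with s ≤ x.1, u x := by
    simp only [Finset.sum_filter, Fintype.sum_prod_type]
    exact Finset.sum_congr rfl fun _ _ => by split_ifs <;> simp
  have hcols : ∑ q with t ≤ q, ∑ p, u (p, q) = ∑ x : ι × κ with t ≤ x.2, u x := by
    simp only [Finset.sum_filter, Fintype.sum_prod_type_right]
    exact Finset.sum_congr rfl fun _ _ => by split_ifs <;> simp
  rw [hrows, hcols, upperSum]
  simp only [Finset.sum_filter, ← Finset.sum_add_distrib]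
  refine Finset.sum_congr rfl fun x _ => ?_
  rcases le_or_gt s x.1 with hs | hs <;> rcases le_or_gt t x.2 with ht | ht <;>
    simp [Prod.le_def, DiagLT, hs, ht, not_le.mpr, not_lt.mpr]

lemma upperSum_le_of_margins_eq {u v : ι × κ → ℕ}
    (hrow : ∀ p, ∑ q, u (p, q) = ∑ q, v (p, q)) (hcol : ∀ q, ∑ p, u (p, q) = ∑ p, v (p, q))
    (hanti : ∀ x y, u x ≠ 0 → u y ≠ 0 → ¬ DiagLT x y) (x : ι × κ) :
    upperSum u x ≤ upperSum v x := by
  obtain ⟨s, t⟩ := x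
  by_cases hzero : upperSum u (s, t) = 0
  · simp [hzero]
  obtain ⟨y, hy, huy⟩ := Finset.exists_ne_zero_of_sum_ne_zero hzero
  have hle : (s, t) ≤ y := by simpa using hy
  have hbelow : ∑ x with DiagLT x (s, t), u x = 0 := by
    refine Finset.sum_eq_zero fun x hx => ?_
    have hlt : DiagLT x (s, t) := (Finset.mem_filter.mp hx).2
    by_contra hux
    exact hanti x y hux huy ⟨hlt.1.trans_le hle.1, hlt.2.trans_le hle.2⟩
  have hmass : ∑ x, u x = ∑ x, v x := by
    simp only [Fintype.sum_prod_type, hrow]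
  have hu := upperSum_add_sum u s t
  have hv := upperSum_add_sum v s t
  simp only [hrow, hcol] at hu
  lia

lemma rankWeight_sum_single_perm_lt {n : ℕ} {p : Fin n → ι} {q : Fin n → κ} (hp : StrictMono p)
    (hq : StrictMono q) {σ : Equiv.Perm (Fin n)} (hσ : σ ≠ 1) :
    rankWeight (∑ i, Finsupp.single (p (σ i), q i) 1) <
      rankWeight (∑ i, Finsupp.single (p i, q i) 1) := by
  have hf := downCard_strictMono.comp hp
  have hg := downCard_strictMono.comp hq
  simp only [map_sum, rankWeight_single]
  have hmono := (hf.monotone.monovary hg.monotone).sum_comp_perm_mul_lt_sum_mul_iff (σ := σ)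
  refine hmono.mpr fun hmv => hσ ?_
  have hσmono : Monotone σ := fun i j hij => by
    rcases hij.eq_or_lt with rfl | hlt
    · exact le_rfl
    · exact hf.le_iff_le.mp (hmv (hg hlt))
  refine Equiv.ext fun i => congrFun ?_ i
  exact ((hσmono.strictMono_of_injective σ.injective).range_inj strictMono_id).mp (by simp)

end Tables

-- Mirsky's argument: colour by the length of the longest chain ending at a point.
lemma exists_coloring_of_no_chain {α : Type*} (r : α → α → Prop) [IsTrans α r] (n : ℕ) (S : Set α)
    (hS : ¬∃ f : Fin (n + 1) → α, (∀ i, f i ∈ S) ∧ ∀ i j, i < j → r (f i) (f j)) :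
    ∃ c : α → ℕ, (∀ x ∈ S, c x < n) ∧ ∀ x ∈ S, ∀ y ∈ S, r x y → c x ≠ c y := by
  induction n generalizing S with
  | zero =>
    have hempty : ∀ x, x ∉ S := fun x hx =>
      hS ⟨fun _ => x, fun _ => hx, fun i j hij => absurd hij (by lia)⟩
    exact ⟨fun _ => 0, fun x hx => absurd hx (hempty x), fun x hx => absurd hx (hempty x)⟩
  | succ n ih =>
    let T : Set α := {x ∈ S | ∃ y ∈ S, r y x}
    obtain ⟨c, hcn, hc⟩ := ih T <| by
      rintro ⟨f, hfT, hf⟩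
      obtain ⟨-, y, hyS, hy⟩ := hfT 0
      exact hS ⟨Matrix.vecCons y f, Fin.forall_fin_succ.mpr ⟨hyS, fun i => (hfT i).1⟩,
        (liftFun_vecCons r).mpr ⟨hy, hf⟩⟩
    refine ⟨fun x => if x ∈ T then c x else n, fun x _ => ?_, fun x hx y hy hxy => ?_⟩
    · dsimp only
      split_ifs with hxT
      · exact (hcn x hxT).trans n.lt_succ_self
      · exact n.lt_succ_self
    · have hyT : y ∈ T := ⟨hy, x, hx, hxy⟩
      dsimp only
      rw [if_pos hyT]
      split_ifs with hxT
      · exact hc x hxT y hyT hxy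
      · exact (hcn y hyT).ne'

section FactorHom

variable {ι κ R S : Type*} {n : ℕ}

/-- The comorphism of the matrix product: the generic `ι × κ` matrix is sent to the product of a
generic `ι × n` matrix, with entries `X (inl (p, k))`, and a generic `n × κ` matrix, with entries
`X (inr (q, k))`. -/
def factorHom (ι κ : Type*) (n : ℕ) (R : Type*) [CommSemiring R] :
    MvPolynomial (ι × κ) R →ₐ[R] MvPolynomial (ι × Fin n ⊕ κ × Fin n) R :=
  aeval fun x => ∑ k, X (.inl (x.1, k)) * X (.inr (x.2, k))

/-- The exponent of the summand `X (inl (p, k)) * X (inr (q, k))` of `factorHom (X (p, q))`. -/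
def pairExponent (x : (ι × κ) × Fin n) : ι × Fin n ⊕ κ × Fin n →₀ ℕ :=
  Finsupp.single (.inl (x.1.1, x.2)) 1 + Finsupp.single (.inr (x.1.2, x.2)) 1

/-- A table of coloured entries `((p, q), k)` records one summand of each factor in the expansion of
`factorHom` at a monomial; `marginal` is the exponent of the resulting monomial. -/
def marginal : ((ι × κ) × Fin n →₀ ℕ) →+ (ι × Fin n ⊕ κ × Fin n →₀ ℕ) :=
  Finsupp.weight pairExponent

/-- The exponent obtained from a coloured table by forgetting the colours. -/
def total : ((ι × κ) × Fin n →₀ ℕ) →+ (ι × κ →₀ ℕ) :=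
  Finsupp.mapDomain.addMonoidHom Prod.fst

lemma total_single (x : (ι × κ) × Fin n) :
    total (Finsupp.single x 1) = Finsupp.single x.1 1 :=
  Finsupp.mapDomain_single

lemma marginal_single (x : (ι × κ) × Fin n) :
    marginal (Finsupp.single x 1) = pairExponent x := by
  rw [marginal, Finsupp.weight_single, one_smul]

lemma finsupp_nat_induction {α : Type*} {motive : (α →₀ ℕ) → Prop} (ν : α →₀ ℕ)
    (zero : motive 0) (add_single : ∀ x ν, motive ν → motive (Finsupp.single x 1 + ν)) :
    motive ν := by
  induction ν using Finsupp.induction with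
  | zero => exact zero
  | single_add x k ν _ _ ih =>
    clear * - ih add_single
    induction k with
    | zero => simpa using ih
    | succ k ihk =>
      rw [Finsupp.single_add, add_comm (Finsupp.single x k), add_assoc]
      exact add_single x _ ihk

lemma total_apply (N : (ι × κ) × Fin n →₀ ℕ) (x : ι × κ) : total N x = ∑ k, N (x, k) := by
  induction N using finsupp_nat_induction with
  | zero => simp
  | add_single y N ih =>
    obtain ⟨y, l⟩ := y
    simp [total_single, ih, Finset.sum_add_distrib, Finsupp.single_apply, ite_and]

lemma marginal_inl [Fintype κ] (N : (ι × κ) × Fin n →₀ ℕ) (p : ι) (k : Fin n) :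
    marginal N (.inl (p, k)) = ∑ q, N ((p, q), k) := by
  induction N using finsupp_nat_induction with
  | zero => simp
  | add_single y N ih =>
    obtain ⟨⟨p', q'⟩, l⟩ := y
    simp [marginal_single, pairExponent, ih, Finset.sum_add_distrib, Finsupp.single_apply, ite_and]

lemma marginal_inr [Fintype ι] (N : (ι × κ) × Fin n →₀ ℕ) (q : κ) (k : Fin n) :
    marginal N (.inr (q, k)) = ∑ p, N ((p, q), k) := by
  induction N using finsupp_nat_induction with
  | zero => simp
  | add_single y N ih =>
    obtain ⟨⟨p', q'⟩, l⟩ := y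
    simp [marginal_single, pairExponent, ih, Finset.sum_add_distrib, Finsupp.single_apply, ite_and]

variable [CommSemiring R] [CommSemiring S]

lemma factorHom_X (x : ι × κ) :
    factorHom ι κ n R (X x) = ∑ k, monomial (pairExponent (x, k)) 1 := by
  rw [factorHom, aeval_X]
  simp [pairExponent, X, monomial_mul]

lemma factorHom_monomial_zero : factorHom ι κ n R (monomial 0 1) = monomial 0 1 :=
  map_one _

lemma factorHom_monomial_single_add (x : ι × κ) (ν : ι × κ →₀ ℕ) :
    factorHom ι κ n R (monomial (Finsupp.single x 1 + ν) 1) =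
      ∑ k, monomial (pairExponent (x, k)) 1 * factorHom ι κ n R (monomial ν 1) := by
  rw [monomial_single_add, pow_one, map_mul, factorHom_X, Finset.sum_mul]

lemma map_factorHom (f : R →+* S) (F : MvPolynomial (ι × κ) R) :
    map f (factorHom ι κ n R F) = factorHom ι κ n S (map f F) := by
  induction F using MvPolynomial.induction_on with
  | C r => simp [factorHom]
  | add F G hF hG => simp only [map_add, hF, hG]
  | mul_X F x hF => simp only [map_mul, hF, map_X, factorHom_X, map_sum, map_monomial, map_one]

lemma exists_table_of_coeff_factorHom_ne_zero {ν : ι × κ →₀ ℕ} {e : ι × Fin n ⊕ κ × Fin n →₀ ℕ}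
    (he : coeff e (factorHom ι κ n R (monomial ν 1)) ≠ 0) :
    ∃ N : (ι × κ) × Fin n →₀ ℕ, total N = ν ∧ marginal N = e := by
  induction ν using finsupp_nat_induction generalizing e with
  | zero =>
    rw [factorHom_monomial_zero, coeff_monomial] at he
    exact ⟨0, map_zero _, (map_zero _).trans (ite_ne_right_iff.mp he).1⟩
  | add_single x ν ih =>
    rw [factorHom_monomial_single_add, coeff_sum] at he
    obtain ⟨k, -, hk⟩ := Finset.exists_ne_zero_of_sum_ne_zero he
    rw [coeff_monomial_mul', ite_ne_right_iff] at hk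
    obtain ⟨N, rfl, hN⟩ := ih (right_ne_zero_of_mul hk.2)
    refine ⟨Finsupp.single (x, k) 1 + N, ?_, ?_⟩
    · rw [map_add, total_single]
    · rw [map_add, marginal_single, hN, add_tsub_cancel_of_le hk.1]

lemma coeff_marginal_factorHom_ne_zero [CharZero R] (N : (ι × κ) × Fin n →₀ ℕ) :
    coeff (marginal N) (factorHom ι κ n R (monomial (total N) 1)) ≠ 0 := by
  -- Over `ℕ` the summands contributing to a coefficient cannot cancel.
  have hpos : 0 < coeff (marginal N) (factorHom ι κ n ℕ (monomial (total N) 1)) := by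
    induction N using finsupp_nat_induction with
    | zero => simp
    | add_single x N ih =>
      rw [map_add, map_add, total_single, marginal_single, factorHom_monomial_single_add,
        coeff_sum]
      refine Finset.sum_pos' (fun _ _ => Nat.zero_le _) ⟨x.2, Finset.mem_univ _, ?_⟩
      rwa [coeff_monomial_mul, one_mul]
  have hcast := congrArg (coeff (marginal N))
    (map_factorHom (n := n) (Nat.castRingHom R) (monomial (total N) 1))
  rw [coeff_map, map_monomial, map_one (Nat.castRingHom R)] at hcast
  rw [← hcast, eq_natCast, Nat.cast_ne_zero]
  exact hpos.ne'

end FactorHom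

section MinorIdeal

variable {ι κ R : Type*} {n : ℕ} [CommRing R]

/-- The ideal of `(n + 1) × (n + 1)` minors of the generic `ι × κ` matrix; rows and columns may be
repeated or permuted. -/
def minorIdeal (ι κ : Type*) (n : ℕ) (R : Type*) [CommRing R] : Ideal (MvPolynomial (ι × κ) R) :=
  Ideal.span {D | ∃ (p : Fin (n + 1) → ι) (q : Fin (n + 1) → κ),
    D = Matrix.det (Matrix.of fun i j => X (p i, q j))}

lemma sum_sign_smul_monomial_mem_minorIdeal (p : Fin (n + 1) → ι) (q : Fin (n + 1) → κ)
    (ν : ι × κ →₀ ℕ) :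
    ∑ σ : Equiv.Perm (Fin (n + 1)), Equiv.Perm.sign σ •
      monomial (∑ i, Finsupp.single (p (σ i), q i) 1 + ν) 1 ∈ minorIdeal ι κ n R := by
  have hmul := (minorIdeal ι κ n R).mul_mem_right (monomial ν 1) (Ideal.subset_span ⟨p, q, rfl⟩)
  rw [Matrix.det_apply, Finset.sum_mul] at hmul
  convert hmul using 2 with σ
  rw [smul_mul_assoc, ← mul_one (1 : R), ← monomial_mul, monomial_sum_one, mul_one]
  rfl

lemma det_mul_eq_zero_of_succ (A : Matrix (Fin (n + 1)) (Fin n) R)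
    (B : Matrix (Fin n) (Fin (n + 1)) R) : (A * B).det = 0 := by
  let A' : Matrix (Fin (n + 1)) (Fin (n + 1)) R := Matrix.of fun i => Fin.snoc (A i) 0
  let B' : Matrix (Fin (n + 1)) (Fin (n + 1)) R :=
    Matrix.of fun i j => Fin.snoc (α := fun _ => R) (B · j) 0 i
  have hpad : A * B = A' * B' := by
    ext i j
    simp [A', B', Matrix.mul_apply, Fin.sum_univ_castSucc]
  rw [hpad, Matrix.det_mul, Matrix.det_eq_zero_of_column_eq_zero (Fin.last n), zero_mul]
  simp [A']

lemma minorIdeal_le_ker_factorHom : minorIdeal ι κ n R ≤ RingHom.ker (factorHom ι κ n R) := by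
  rw [minorIdeal, Ideal.span_le]
  rintro _ ⟨p, q, rfl⟩
  let A : Matrix (Fin (n + 1)) (Fin n) (MvPolynomial (ι × Fin n ⊕ κ × Fin n) R) :=
    Matrix.of fun i k => X (.inl (p i, k))
  let B : Matrix (Fin n) (Fin (n + 1)) (MvPolynomial (ι × Fin n ⊕ κ × Fin n) R) :=
    Matrix.of fun k j => X (.inr (q j, k))
  have hAB : (factorHom ι κ n R).mapMatrix (Matrix.of fun i j => X (p i, q j)) = A * B := by
    ext i j
    simp [A, B, factorHom, Matrix.mul_apply]
  rw [SetLike.mem_coe, RingHom.mem_ker, AlgHom.map_det, hAB, det_mul_eq_zero_of_succ]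

end MinorIdeal

section Straightening

variable {ι κ R : Type*} {n : ℕ} [LinearOrder ι] [LinearOrder κ]

instance : IsTrans (ι × κ) DiagLT :=
  ⟨fun _ _ _ hxy hyz => ⟨hxy.1.trans hyz.1, hxy.2.trans hyz.2⟩⟩

/-- The exponents of monomials not divisible by the main diagonal of an `(n + 1) × (n + 1)` minor
with increasing rows and columns. -/
def IsStandard (n : ℕ) (ν : ι × κ →₀ ℕ) : Prop :=
  ¬∃ f : Fin (n + 1) → ι × κ, (∀ i, f i ∈ (ν.support : Set (ι × κ))) ∧
    ∀ i j, i < j → DiagLT (f i) (f j)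

/-- A coloured table each of whose colour classes is free of diagonal pairs. -/
def IsAntidiagonal (N : (ι × κ) × Fin n →₀ ℕ) : Prop :=
  ∀ k x y, N (x, k) ≠ 0 → N (y, k) ≠ 0 → ¬DiagLT x y

lemma IsStandard.exists_isAntidiagonal [NeZero n] {ν : ι × κ →₀ ℕ} (hν : IsStandard n ν) :
    ∃ N : (ι × κ) × Fin n →₀ ℕ, total N = ν ∧ IsAntidiagonal N := by
  obtain ⟨c, hcn, hc⟩ := exists_coloring_of_no_chain DiagLT n _ hν
  let paint : ι × κ → (ι × κ) × Fin n := fun x => (x, Fin.ofNat n (c x))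
  have mem_of_ne_zero {x k} (hx : ν.mapDomain paint (x, k) ≠ 0) :
      x ∈ ν.support ∧ c x = k := by
    obtain ⟨y, hy, hyx⟩ :=
      Finset.mem_image.mp (Finsupp.mapDomain_support (Finsupp.mem_support_iff.mpr hx))
    obtain ⟨rfl, rfl⟩ := Prod.mk.inj hyx
    exact ⟨hy, (Nat.mod_eq_of_lt (hcn y hy)).symm⟩
  refine ⟨ν.mapDomain paint, ?_, fun k x y hx hy hxy => ?_⟩
  · exact (Finsupp.mapDomain_comp (g := Prod.fst)).symm.trans Finsupp.mapDomain_id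
  · obtain ⟨hxν, hcx⟩ := mem_of_ne_zero hx
    obtain ⟨hyν, hcy⟩ := mem_of_ne_zero hy
    exact hc x hxν y hyν hxy (hcx.trans hcy.symm)

lemma upperSum_total [Fintype ι] [Fintype κ] (N : (ι × κ) × Fin n →₀ ℕ) (x : ι × κ) :
    upperSum (total N) x = ∑ k, upperSum (fun y => N (y, k)) x := by
  simp only [upperSum, total_apply]
  exact Finset.sum_comm

-- An antidiagonal table minimises every upper sum among the tables with its marginal.
lemma IsAntidiagonal.total_eq_of_marginal_eq [Fintype ι] [Fintype κ]
    {N M : (ι × κ) × Fin n →₀ ℕ} (hN : IsAntidiagonal N)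
    (hmarg : marginal N = marginal M) (hrank : rankWeight (total M) ≤ rankWeight (total N)) :
    total N = total M := by
  have hle (x : ι × κ) : upperSum (total N) x ≤ upperSum (total M) x := by
    rw [upperSum_total, upperSum_total]
    refine Finset.sum_le_sum fun k _ => upperSum_le_of_margins_eq (fun p => ?_) (fun q => ?_)
      (hN k) x
    · rw [← marginal_inl, ← marginal_inl, hmarg]
    · rw [← marginal_inr, ← marginal_inr, hmarg]
  rw [rankWeight_eq_sum_upperSum, rankWeight_eq_sum_upperSum] at hrank
  have hsum := hrank.antisymm' (Finset.sum_le_sum fun x _ => hle x)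
  exact DFunLike.coe_injective <| eq_of_upperSum_eq fun x =>
    (Finset.sum_eq_sum_iff_of_le fun x _ => hle x).mp hsum x (Finset.mem_univ x)

variable [Finite ι] [Finite κ]

lemma eq_zero_of_factorHom_eq_zero_of_isStandard [NeZero n] [CommRing R] [IsDomain R] [CharZero R]
    {F : MvPolynomial (ι × κ) R} (hF : factorHom ι κ n R F = 0)
    (hstd : ∀ ν ∈ F.support, IsStandard n ν) : F = 0 := by
  cases nonempty_fintype ι
  cases nonempty_fintype κ
  by_contra hne
  obtain ⟨ν, hν, hmax⟩ := F.support.exists_max_image rankWeight (support_nonempty.mpr hne)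
  obtain ⟨N, rfl, hN⟩ := (hstd ν hν).exists_isAntidiagonal
  have hexpand : ∑ ν ∈ F.support, coeff ν F * coeff (marginal N)
      (factorHom ι κ n R (monomial ν 1)) = 0 := by
    rw [← coeff_zero (R := R) (marginal N), ← hF]
    conv_rhs => rw [F.as_sum, map_sum, coeff_sum]
    refine Finset.sum_congr rfl fun ν _ => ?_
    rw [← smul_eq_mul, ← coeff_smul, ← map_smul, smul_monomial, smul_eq_mul, mul_one]
  rw [Finset.sum_eq_single_of_mem _ hν fun ν' hν' hne' => ?_] at hexpand
  · exact (mul_ne_zero (mem_support_iff.mp hν) (coeff_marginal_factorHom_ne_zero N)) hexpand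
  · by_contra hcoeff
    obtain ⟨M, rfl, hM⟩ := exists_table_of_coeff_factorHom_ne_zero (right_ne_zero_of_mul hcoeff)
    exact hne' (hN.total_eq_of_marginal_eq hM.symm (hmax _ hν')).symm

lemma sum_single_le_of_injective {α β : Type*} [Fintype β] {f : β → α} (hf : f.Injective)
    {ν : α →₀ ℕ} (hν : ∀ i, f i ∈ ν.support) : ∑ i, Finsupp.single (f i) 1 ≤ ν := by
  intro x
  rw [Finsupp.finsetSum_apply]
  simp only [Finsupp.single_apply]
  by_cases hx : ∃ i, f i = x
  · obtain ⟨i, rfl⟩ := hx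
    simpa [hf.eq_iff] using Nat.one_le_iff_ne_zero.mpr (Finsupp.mem_support_iff.mp (hν i))
  · simp [not_exists.mp hx]

-- Straightening: the main diagonal is the term of a minor with the largest `rankWeight`.
lemma monomial_mem_minorIdeal_sup_restrictSupport (n : ℕ) (R : Type*) [CommRing R]
    (ν : ι × κ →₀ ℕ) :
    monomial ν 1 ∈ (minorIdeal ι κ n R).restrictScalars R ⊔
      restrictSupport R {ν | IsStandard n ν} := by
  cases nonempty_fintype ι
  cases nonempty_fintype κ
  induction hw : rankWeight ν using Nat.strong_induction_on generalizing ν with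
  | _ w ih =>
    subst hw
    by_cases hstd : IsStandard n ν
    · exact Submodule.mem_sup_right ((monomial_mem_restrictSupport R).mpr (.inl hstd))
    obtain ⟨f, hfν, hf⟩ := not_not.mp hstd
    have hp : StrictMono fun i => (f i).1 := fun i j hij => (hf i j hij).1
    have hq : StrictMono fun i => (f i).2 := fun i j hij => (hf i j hij).2
    obtain ⟨ν, rfl⟩ := exists_add_of_le
      (sum_single_le_of_injective (Function.Injective.of_comp (f := Prod.fst) hp.injective) hfν)
    have hdet := sum_sign_smul_monomial_mem_minorIdeal (R := R) (fun i => (f i).1)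
      (fun i => (f i).2) ν
    rw [← Finset.add_sum_erase _ _ (Finset.mem_univ 1), Equiv.Perm.sign_one, one_smul] at hdet
    refine (Submodule.add_mem_iff_left _ (Submodule.sum_mem _ fun σ hσ => ?_)).mp
      (Submodule.mem_sup_left hdet)
    have hlt := Nat.add_lt_add_right
      (rankWeight_sum_single_perm_lt hp hq (Finset.ne_of_mem_erase hσ)) (rankWeight ν)
    rw [← map_add, ← map_add] at hlt
    rcases Int.units_eq_one_or (Equiv.Perm.sign σ) with hsign | hsign
    · simpa [hsign] using ih _ hlt _ rfl
    · simpa [hsign] using ih _ hlt _ rfl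

end Straightening

/-- The second fundamental theorem of invariant theory for `GL n`. -/
theorem ker_factorHom {ι κ R : Type*} [Finite ι] [Finite κ] [CommRing R] [IsDomain R] [CharZero R]
    (n : ℕ) [NeZero n] : RingHom.ker (factorHom ι κ n R) = minorIdeal ι κ n R := by
  refine le_antisymm (fun F hF => ?_) minorIdeal_le_ker_factorHom
  let _ : LinearOrder ι := LinearOrder.lift' _ (Finite.equivFin ι).injective
  let _ : LinearOrder κ := LinearOrder.lift' _ (Finite.equivFin κ).injective
  have hstraight : F ∈ (minorIdeal ι κ n R).restrictScalars R ⊔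
      restrictSupport R {ν | IsStandard n ν} := by
    rw [F.as_sum]
    refine Submodule.sum_mem _ fun ν _ => ?_
    simpa [smul_monomial] using
      Submodule.smul_mem _ (coeff ν F) (monomial_mem_minorIdeal_sup_restrictSupport n R ν)
  obtain ⟨D, hD, G, hG, rfl⟩ := Submodule.mem_sup.mp hstraight
  have hG0 : G = 0 := by
    refine eq_zero_of_factorHom_eq_zero_of_isStandard (n := n) ?_ fun ν hν => hG hν
    rwa [RingHom.mem_ker, map_add, minorIdeal_le_ker_factorHom hD, zero_add] at hF
  rwa [hG0, add_zero]

section FischerForm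

variable {σ F : Type*} [Field F]

/-- The multi-index factorial `∏ i, (e i)!`. -/
def multiFactorial (e : σ →₀ ℕ) : ℕ := e.prod fun _ k => k.factorial

lemma multiFactorial_pos (e : σ →₀ ℕ) : 0 < multiFactorial e :=
  Finset.prod_pos fun _ _ => Nat.factorial_pos _

lemma multiFactorial_add_single (e : σ →₀ ℕ) (i : σ) :
    multiFactorial (e + Finsupp.single i 1) = multiFactorial e * (e i + 1) := by
  have split_off (e : σ →₀ ℕ) : multiFactorial e = (e i).factorial * multiFactorial (e.erase i) :=
    (e.mul_prod_erase' i _ fun _ => Nat.factorial_zero).symm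
  rw [split_off, split_off e, Finsupp.erase_add, Finsupp.erase_single, add_zero, Finsupp.add_apply,
    Finsupp.single_eq_same, Nat.factorial_succ]
  ring

/-- The Fischer inner product on polynomials: monomials are orthogonal, and `X ^ e` has square norm
`e!`. It makes multiplication by a variable adjoint to the corresponding partial derivative. -/
def fischerForm (σ F : Type*) [Field F] : LinearMap.BilinForm F (MvPolynomial σ F) :=
  (basisMonomials σ F).constr F fun e => (multiFactorial e : F) • lcoeff F e

lemma fischerForm_monomial (e : σ →₀ ℕ) (a : F) (g : MvPolynomial σ F) :
    fischerForm σ F (monomial e a) g = a * (multiFactorial e * coeff e g) := by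
  have : monomial e a = a • basisMonomials σ F e := by simp [smul_monomial]
  rw [this, map_smul, fischerForm, Module.Basis.constr_basis]
  simp [lcoeff_apply]

lemma fischerForm_comm (f g : MvPolynomial σ F) :
    fischerForm σ F f g = fischerForm σ F g f := by
  suffices fischerForm σ F = (fischerForm σ F).flip from
    LinearMap.congr_fun₂ this f g
  refine (basisMonomials σ F).ext fun e => (basisMonomials σ F).ext fun e' => ?_
  rcases eq_or_ne e e' with rfl | h
  · rfl
  · simp [fischerForm_monomial, coeff_monomial, h, h.symm]

lemma fischerForm_self_eq_zero [LinearOrder F] [IsStrictOrderedRing F] {f : MvPolynomial σ F} :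
    fischerForm σ F f f = 0 ↔ f = 0 := by
  refine ⟨fun h => ?_, fun h => by simp [h]⟩
  have expand : fischerForm σ F f f = ∑ e ∈ f.support, multiFactorial e * coeff e f ^ 2 := by
    conv_lhs => enter [1]; rw [f.as_sum]
    simp only [map_sum, LinearMap.sum_apply, fischerForm_monomial]
    exact Finset.sum_congr rfl fun e _ => by ring
  rw [expand, Finset.sum_eq_zero_iff_of_nonneg fun e _ => by positivity] at h
  ext e
  by_contra he
  exact he (by simpa [(multiFactorial_pos e).ne'] using h e (mem_support_iff.2 he))

lemma fischerForm_X_mul (i : σ) (f g : MvPolynomial σ F) :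
    fischerForm σ F (X i * f) g = fischerForm σ F f (pderiv i g) := by
  induction f using MvPolynomial.induction_on' with
  | monomial e a =>
    have : X i * monomial e a = monomial (e + Finsupp.single i 1) a := by
      rw [X, monomial_mul, one_mul, add_comm]
    rw [this, fischerForm_monomial, fischerForm_monomial, coeff_pderiv, multiFactorial_add_single]
    push_cast
    ring
  | add p q hp hq => simp only [mul_add, map_add, LinearMap.add_apply, hp, hq]

lemma totalDegree_pderiv_le (i : σ) (f : MvPolynomial σ F) :
    (pderiv i f).totalDegree ≤ f.totalDegree - 1 := by
  refine Finset.sup_le fun e he => ?_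
  have he' : e + Finsupp.single i 1 ∈ f.support := by
    rw [mem_support_iff, coeff_pderiv] at he
    exact mem_support_iff.2 (left_ne_zero_of_mul he)
  have := le_totalDegree he'
  rw [Finsupp.sum_add_index' (by simp) (by simp), Finsupp.sum_single_index rfl] at this
  omega

end FischerForm

lemma exists_mem_forall_apply_sub_eq_zero {F V : Type*} [Field F] [AddCommGroup V] [Module F V]
    (B : LinearMap.BilinForm F V) (hB : ∀ v, B v v = 0 → v = 0) (U : Submodule F V)
    [FiniteDimensional F U] (v : V) : ∃ u ∈ U, ∀ w ∈ U, B (v - u) w = 0 := by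
  have nondegenerate : (B.restrict U).Nondegenerate :=
    ⟨fun u hu => Subtype.ext (hB u (hu u)), fun u hu => Subtype.ext (hB u (hu u))⟩
  refine ⟨((B.restrict U).toDual nondegenerate).symm ((B v).comp U.subtype), Subtype.prop _,
    fun w hw => ?_⟩
  rw [map_sub, LinearMap.sub_apply, sub_eq_zero]
  exact (LinearMap.BilinForm.apply_toDual_symm_apply (hB := nondegenerate)
    ((B v).comp U.subtype) ⟨w, hw⟩).symm

section Purity

variable {ι κ F : Type*} [Field F] {n : ℕ}

lemma factorHom_X_eq_sum_mul (x : ι × κ) :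
    factorHom ι κ n F (X x) = ∑ k, X (.inl (x.1, k)) * X (.inr (x.2, k)) := by
  simp [factorHom]

/-- The Fischer adjoint of multiplication by `factorHom (X x)`. -/
def factorAdjoint (n : ℕ) (x : ι × κ) :
    MvPolynomial (ι × Fin n ⊕ κ × Fin n) F →ₗ[F] MvPolynomial (ι × Fin n ⊕ κ × Fin n) F :=
  ∑ k : Fin n, (pderiv (R := F) (.inl (x.1, k))).toLinearMap ∘ₗ
    (pderiv (R := F) (.inr (x.2, k))).toLinearMap

lemma factorAdjoint_apply (x : ι × κ) (g : MvPolynomial (ι × Fin n ⊕ κ × Fin n) F) :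
    factorAdjoint n x g = ∑ k, pderiv (.inl (x.1, k)) (pderiv (.inr (x.2, k)) g) := by
  simp [factorAdjoint]

lemma fischerForm_factorHom_X_mul (x : ι × κ) (f g : MvPolynomial (ι × Fin n ⊕ κ × Fin n) F) :
    fischerForm _ F (factorHom ι κ n F (X x) * f) g = fischerForm _ F f (factorAdjoint n x g) := by
  simp only [factorHom_X_eq_sum_mul, factorAdjoint_apply, Finset.sum_mul, map_sum,
    LinearMap.sum_apply]
  refine Finset.sum_congr rfl fun k _ => ?_
  rw [mul_comm (X (Sum.inl (x.1, k))), mul_assoc, fischerForm_X_mul, fischerForm_X_mul]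

lemma pderiv_aeval {σ τ R : Type*} [CommRing R] [Fintype σ] (v : σ → MvPolynomial τ R) (t : τ)
    (G : MvPolynomial σ R) : pderiv t (aeval v G) = ∑ x, aeval v (pderiv x G) * pderiv t (v x) := by
  induction G using MvPolynomial.induction_on with
  | C a => simp
  | add p q hp hq => simp only [map_add, hp, hq, add_mul, Finset.sum_add_distrib]
  | mul_X p y hp =>
    simp only [map_mul, pderiv_mul, hp, map_add, aeval_X, Finset.sum_mul, add_mul,
      Finset.sum_add_distrib, pderiv_X, Pi.single_apply, apply_ite (aeval v), map_zero,
      mul_ite, ite_mul, mul_one, mul_zero, zero_mul, Finset.sum_ite_eq,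
      Finset.mem_univ, if_true]
    exact congrArg (· + _) (Finset.sum_congr rfl fun x _ => by ring)

lemma pderiv_inl_factorHom [Finite ι] [Fintype κ] (p : ι) (k : Fin n) (G : MvPolynomial (ι × κ) F) :
    pderiv (.inl (p, k)) (factorHom ι κ n F G) =
      ∑ q, factorHom ι κ n F (pderiv (p, q) G) * X (.inr (q, k)) := by
  cases nonempty_fintype ι
  rw [factorHom, pderiv_aeval, Fintype.sum_prod_type, Finset.sum_comm]
  refine Finset.sum_congr rfl fun q _ => ?_
  simp [pderiv_X, Pi.single_apply, ite_and]

lemma pderiv_inr_factorHom [Fintype ι] [Finite κ] (q : κ) (k : Fin n) (G : MvPolynomial (ι × κ) F) :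
    pderiv (.inr (q, k)) (factorHom ι κ n F G) =
      ∑ p, factorHom ι κ n F (pderiv (p, q) G) * X (.inl (p, k)) := by
  cases nonempty_fintype κ
  rw [factorHom, pderiv_aeval, Fintype.sum_prod_type]
  refine Finset.sum_congr rfl fun p _ => ?_
  simp [pderiv_X, Pi.single_apply, ite_and]

lemma factorAdjoint_factorHom [Fintype ι] [Fintype κ] (x : ι × κ) (G : MvPolynomial (ι × κ) F) :
    factorAdjoint n x (factorHom ι κ n F G) = factorHom ι κ n F
      (∑ p, ∑ q, X (p, q) * pderiv (x.1, q) (pderiv (p, x.2) G) + n • pderiv x G) := by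
  simp only [factorAdjoint_apply, pderiv_inr_factorHom, map_sum, pderiv_mul, pderiv_inl_factorHom,
    Finset.sum_add_distrib, map_add, map_mul, map_nsmul, factorHom_X_eq_sum_mul, Finset.sum_mul]
  congr 1
  · rw [Finset.sum_comm]
    refine Finset.sum_congr rfl fun p _ => ?_
    rw [Finset.sum_comm]
    exact Finset.sum_congr rfl fun q _ => Finset.sum_congr rfl fun k _ => by ring
  · simp [pderiv_X, Pi.single_apply]

lemma totalDegree_factorHom_X_mul_factorAdjoint_le (x : ι × κ)
    (f : MvPolynomial (ι × Fin n ⊕ κ × Fin n) F) :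
    (factorHom ι κ n F (X x) * factorAdjoint n x f).totalDegree ≤ max f.totalDegree 2 := by
  have degree_quadric : (factorHom ι κ n F (X x)).totalDegree ≤ 2 := by
    rw [factorHom_X_eq_sum_mul]
    exact totalDegree_finsetSum_le fun k _ => (totalDegree_mul _ _).trans (by simp)
  have degree_adjoint : (factorAdjoint n x f).totalDegree ≤ f.totalDegree - 2 := by
    rw [factorAdjoint_apply]
    refine totalDegree_finsetSum_le fun k _ => (totalDegree_pderiv_le _ _).trans ?_
    have := totalDegree_pderiv_le (.inr (x.2, k)) f
    omega
  have := totalDegree_mul (factorHom ι κ n F (X x)) (factorAdjoint n x f)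
  omega

lemma fischerForm_eq_zero_of_mem_map {s : Set (ι × κ)}
    {f g : MvPolynomial (ι × Fin n ⊕ κ × Fin n) F}
    (hf : f ∈ (Ideal.span (X '' s)).map (factorHom ι κ n F))
    (hg : ∀ x ∈ s, factorAdjoint n x g = 0) : fischerForm _ F f g = 0 := by
  rw [Ideal.map_span] at hf
  induction hf using Submodule.closure_induction with
  | zero => simp
  | add f₁ f₂ _ _ h₁ h₂ => rw [map_add, LinearMap.add_apply, h₁, h₂, add_zero]
  | smul_mem r _ hx =>
    obtain ⟨_, ⟨x, hx, rfl⟩, rfl⟩ := hx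
    rw [smul_eq_mul, mul_comm, fischerForm_factorHom_X_mul, hg x hx, map_zero]

/-- Let `u` be the Fischer projection of `factorHom G` to the image of `J`. The adjoints
of multiplication by the generators of `J` preserve the range of `factorHom`, so they kill
`factorHom G - u`, which is therefore orthogonal to the extension of `J`, hence to itself. -/
lemma mem_sup_ker_of_factorHom_mem_map_of_ordered [LinearOrder F] [IsStrictOrderedRing F]
    [Finite ι] [Finite κ] {s : Set (ι × κ)} {G : MvPolynomial (ι × κ) F}
    (hG : factorHom ι κ n F G ∈ (Ideal.span (X '' s)).map (factorHom ι κ n F)) :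
    G ∈ Ideal.span (X '' s) ⊔ RingHom.ker (factorHom ι κ n F) := by
  cases nonempty_fintype ι
  cases nonempty_fintype κ
  set J : Ideal (MvPolynomial (ι × κ) F) := Ideal.span (X '' s)
  set d := (factorHom ι κ n F G).totalDegree
  let U := (J.restrictScalars F).map (factorHom ι κ n F).toLinearMap ⊓
    restrictTotalDegree (ι × Fin n ⊕ κ × Fin n) F (d + 2)
  have : FiniteDimensional F U := Submodule.finiteDimensional_of_le inf_le_right
  obtain ⟨_, ⟨⟨H, hH : H ∈ J, rfl⟩, hdeg⟩, orthogonal⟩ := exists_mem_forall_apply_sub_eq_zero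
    (fischerForm _ F) (fun _ => fischerForm_self_eq_zero.1) U (factorHom ι κ n F G)
  simp only [AlgHom.toLinearMap_apply, ← map_sub] at hdeg orthogonal
  have hdeg' : (factorHom ι κ n F (G - H)).totalDegree ≤ d + 2 := by
    rw [map_sub]
    exact (totalDegree_sub _ _).trans (max_le (by omega) ((mem_restrictTotalDegree _ _ _).1 hdeg))
  have adjoint_eq_zero (x) (hx : x ∈ s) : factorAdjoint n x (factorHom ι κ n F (G - H)) = 0 := by
    rw [← fischerForm_self_eq_zero, ← fischerForm_factorHom_X_mul, fischerForm_comm]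
    refine orthogonal _ ⟨?_, (mem_restrictTotalDegree _ _ _).2 <|
      (totalDegree_factorHom_X_mul_factorAdjoint_le x _).trans (by omega)⟩
    rw [factorAdjoint_factorHom, ← map_mul]
    exact ⟨_, J.mul_mem_right _ (Ideal.subset_span ⟨x, hx, rfl⟩), rfl⟩
  have sub_mem : G - H ∈ RingHom.ker (factorHom ι κ n F) := by
    refine fischerForm_self_eq_zero.1 (fischerForm_eq_zero_of_mem_map (s := s) ?_ adjoint_eq_zero)
    rw [map_sub]
    exact sub_mem hG (Ideal.mem_map_of_mem _ hH)
  rw [← add_sub_cancel H G]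
  exact Submodule.add_mem_sup hH sub_mem

end Purity

section Coeffwise

variable {σ F K : Type*} [Field F] [CommRing K] [Algebra F K]

/-- The linear map applying a linear functional of the coefficient ring to each coefficient. -/
def coeffwise (c : K →ₗ[F] F) : MvPolynomial σ K →ₗ[F] MvPolynomial σ F :=
  (basisMonomials σ F).repr.symm.toLinearMap ∘ₗ Finsupp.mapRange.linearMap c ∘ₗ
    ((basisMonomials σ K).repr.restrictScalars F).toLinearMap

lemma coeff_coeffwise (c : K →ₗ[F] F) (f : MvPolynomial σ K) (e : σ →₀ ℕ) :
    coeff e (coeffwise c f) = c (coeff e f) := by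
  rfl

lemma coeffwise_C (c : K →ₗ[F] F) (a : K) :
    coeffwise c (C a : MvPolynomial σ K) = C (c a) := by
  ext e
  rw [coeff_coeffwise, coeff_C, coeff_C, apply_ite c, map_zero]

lemma coeffwise_map_mul (c : K →ₗ[F] F) (g : MvPolynomial σ F) (f : MvPolynomial σ K) :
    coeffwise c (map (algebraMap F K) g * f) = g * coeffwise c f := by
  ext e
  simp only [coeff_coeffwise, coeff_mul, map_sum, coeff_map, ← Algebra.smul_def, map_smul,
    smul_eq_mul]

lemma coeffwise_mem_of_mem_map (c : K →ₗ[F] F) {I : Ideal (MvPolynomial σ F)}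
    {f : MvPolynomial σ K} (hf : f ∈ I.map (map (algebraMap F K))) : coeffwise c f ∈ I := by
  rw [Ideal.map] at hf
  induction hf using Submodule.closure_induction with
  | zero => simp
  | add f₁ f₂ _ _ h₁ h₂ => rw [map_add]; exact add_mem h₁ h₂
  | smul_mem r _ hx =>
    obtain ⟨g, hg, rfl⟩ := hx
    rw [smul_eq_mul, mul_comm, coeffwise_map_mul]
    exact I.mul_mem_right _ hg

lemma mem_of_forall_map_coeffwise_mem {i : Type*} (b : Module.Basis i F K)
    {I : Ideal (MvPolynomial σ K)} {f : MvPolynomial σ K}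
    (h : ∀ j, map (algebraMap F K) (coeffwise (b.coord j) f) ∈ I) : f ∈ I := by
  let S := f.support.biUnion fun e => (b.repr (coeff e f)).support
  have expand : f = ∑ j ∈ S, C (b j) * map (algebraMap F K) (coeffwise (b.coord j) f) := by
    ext e
    simp only [coeff_sum, coeff_C_mul, coeff_map, coeff_coeffwise, b.coord_apply, mul_comm (b _),
      ← Algebra.smul_def]
    by_cases he : coeff e f = 0
    · simp [he]
    · conv_lhs => rw [← b.linearCombination_repr (coeff e f), Finsupp.linearCombination_apply]
      exact Finset.sum_subset (Finset.subset_biUnion_of_mem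
        (fun e => (b.repr (coeff e f)).support) (mem_support_iff.2 he)) fun j _ hj => by
          rw [Finsupp.notMem_support_iff.1 hj]; exact zero_smul F (b j)
  rw [expand]
  exact sum_mem fun j _ => I.mul_mem_left _ (h j)

lemma coeffwise_factorHom {ι κ : Type*} {n : ℕ} (c : K →ₗ[F] F) (G : MvPolynomial (ι × κ) K) :
    coeffwise c (factorHom ι κ n K G) = factorHom ι κ n F (coeffwise c G) := by
  induction G using MvPolynomial.induction_on' with
  | monomial ν a =>
    have : monomial ν a = map (algebraMap F K) (monomial ν 1) * C a := by
      rw [map_monomial, map_one, mul_comm, C_mul_monomial, mul_one]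
    rw [this, map_mul, ← map_factorHom, coeffwise_map_mul, coeffwise_map_mul, map_mul]
    congr 1
    simp only [factorHom, algHom_C, algebraMap_eq, coeffwise_C]
  | add p q hp hq => simp only [map_add, hp, hq]

end Coeffwise

theorem mem_sup_ker_of_factorHom_mem_map {ι κ K : Type*} [Finite ι] [Finite κ] [CommRing K]
    [Algebra ℚ K] {n : ℕ} {s : Set (ι × κ)} {G : MvPolynomial (ι × κ) K}
    (hG : factorHom ι κ n K G ∈ (Ideal.span (X '' s)).map (factorHom ι κ n K)) :
    G ∈ Ideal.span (X '' s) ⊔ RingHom.ker (factorHom ι κ n K) := by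
  have span_eq_map : (Ideal.span (X '' s) : Ideal (MvPolynomial (ι × κ) K)) =
      (Ideal.span (X '' s)).map (map (algebraMap ℚ K)) := by
    rw [Ideal.map_span, Set.image_image]
    simp only [map_X]
  have comm : (factorHom ι κ n K).toRingHom.comp (map (algebraMap ℚ K)) =
      (map (algebraMap ℚ K)).comp (factorHom ι κ n ℚ).toRingHom :=
    RingHom.ext fun F => (map_factorHom (algebraMap ℚ K) F).symm
  have ker_le : (RingHom.ker (factorHom ι κ n ℚ)).map (map (algebraMap ℚ K)) ≤
      RingHom.ker (factorHom ι κ n K) := by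
    refine Ideal.map_le_iff_le_comap.2 fun F hF => ?_
    rw [Ideal.mem_comap, RingHom.mem_ker, ← map_factorHom, RingHom.mem_ker.1 hF, map_zero]
  refine mem_of_forall_map_coeffwise_mem (Module.Basis.ofVectorSpace ℚ K) fun j => ?_
  have coord_mem : coeffwise ((Module.Basis.ofVectorSpace ℚ K).coord j) G ∈
      Ideal.span (X '' s) ⊔ RingHom.ker (factorHom ι κ n ℚ) := by
    refine mem_sup_ker_of_factorHom_mem_map_of_ordered ?_
    rw [← coeffwise_factorHom]
    refine coeffwise_mem_of_mem_map _ ?_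
    rw [span_eq_map] at hG
    change _ ∈ Ideal.map (factorHom ι κ n K).toRingHom _ at hG
    rwa [Ideal.map_map, comm, ← Ideal.map_map] at hG
  have mem_map := Ideal.mem_map_of_mem (map (algebraMap ℚ K)) coord_mem
  rw [Ideal.map_sup, ← span_eq_map] at mem_map
  exact sup_le_sup le_rfl ker_le mem_map

section Prime

/-- The hyperbolic quadratic form `∑ k, u k * v k` in the variables `u k = X (inl k)`,
`v k = X (inr k)`. -/
def hyperbolicForm (τ R : Type*) [Fintype τ] [CommRing R] : MvPolynomial (τ ⊕ τ) R :=
  ∑ k, X (.inl k) * X (.inr k)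

section

variable {τ : Type*} [Fintype τ]

lemma map_hyperbolicForm {R S : Type*} [CommRing R] [CommRing S] (f : R →+* S) :
    map f (hyperbolicForm τ R) = hyperbolicForm τ S := by
  simp [hyperbolicForm]

/-- Fix `z : τ`. If `e` is an exponent of `g` of maximal degree in `X (inl z)`, then the monomial
`X (inl z) * X (inr z) * X ^ e` cannot cancel in the product with `g`. -/
lemma hyperbolicForm_mem_nonZeroDivisors [Nonempty τ] (R : Type*) [CommRing R] :
    hyperbolicForm τ R ∈ nonZeroDivisors (MvPolynomial (τ ⊕ τ) R) := by
  refine mem_nonZeroDivisors_iff_left.2 fun g hg => ?_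
  by_contra hne
  obtain ⟨z⟩ := ‹Nonempty τ›
  obtain ⟨e, he, hmax⟩ := Finset.exists_max_image g.support (fun e => e (.inl z))
    (support_nonempty.2 hne)
  have X_mul_X (k : τ) : (X (.inl k) * X (.inr k) : MvPolynomial (τ ⊕ τ) R) =
      monomial (Finsupp.single (.inl k) 1 + Finsupp.single (.inr k) 1) 1 := by
    rw [X, X, monomial_mul, one_mul]
  have h0 := congrArg (coeff (Finsupp.single (.inl z) 1 + Finsupp.single (.inr z) 1 + e)) hg
  rw [hyperbolicForm, Finset.sum_mul, coeff_sum, Finset.sum_eq_single z _ (by simp), X_mul_X,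
    coeff_monomial_mul, one_mul] at h0
  · exact mem_support_iff.1 he h0
  · intro k _ hk
    rw [X_mul_X, coeff_monomial_mul', one_mul]
    split_ifs with hle
    · by_contra hc
      simpa [Finsupp.single_apply, hk] using hmax _ (mem_support_iff.2 hc)
    · rfl

lemma hyperbolicForm_prime_of_field [Nontrivial τ] (F : Type*) [Field F] :
    Prime (hyperbolicForm τ F) := by
  have eq_sum : hyperbolicForm τ F =
      sumSMulXSMulY (Finsupp.equivFunOnFinite.symm fun _ : τ => (1 : F)) := by
    rw [sumSMulXSMulY, Finsupp.linearCombination_apply, Finsupp.sum_fintype _ _ (by simp)]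
    simp [hyperbolicForm]
  obtain ⟨i, j, hij⟩ := exists_pair_ne τ
  rw [eq_sum]
  refine (irreducible_sumSMulXSMulY _ ⟨i, by simp, j, by simp, hij⟩ fun r hr => ?_).prime
  exact isUnit_of_dvd_one (by simpa using hr i)

end

attribute [local instance] MvPolynomial.algebraMvPolynomial in
lemma isPrime_span_singleton_of_map_fractionRing {σ R : Type*} [CommRing R] [IsDomain R]
    {q : MvPolynomial σ R} (hprime : Prime (map (algebraMap R (FractionRing R)) q))
    (hreg : ∀ c : R, map (Ideal.Quotient.mk (Ideal.span {c})) q ∈ nonZeroDivisors _) :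
    (Ideal.span {q}).IsPrime := by
  let toFrac : MvPolynomial σ R →+* MvPolynomial σ (FractionRing R) := map (algebraMap R _)
  have := (Ideal.span_singleton_prime hprime.ne_zero).2 hprime
  suffices Ideal.span {q} = (Ideal.span {toFrac q}).comap toFrac from this ▸ Ideal.IsPrime.comap _
  refine le_antisymm ?_ fun h hh => ?_
  · rw [Ideal.span_singleton_le_iff_mem, Ideal.mem_comap]
    exact Ideal.mem_span_singleton_self _
  obtain ⟨g, hg⟩ := Ideal.mem_span_singleton.1 (Ideal.mem_comap.1 hh)
  obtain ⟨⟨g₁, ⟨_, c, hc, rfl⟩⟩, hg₁ : g * toFrac (C c) = toFrac g₁⟩ :=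
    IsLocalization.surj ((nonZeroDivisors R).map (C (σ := σ))) g
  have clear_denominators : h * C c = q * g₁ := by
    apply map_injective _ (IsFractionRing.injective R (FractionRing R))
    change toFrac (h * C c) = toFrac (q * g₁)
    rw [map_mul, map_mul, hg, ← hg₁, mul_assoc]
  have hmk (r : R) : Ideal.Quotient.mk (Ideal.span {c}) r = 0 ↔ c ∣ r := by
    rw [Ideal.Quotient.eq_zero_iff_mem, Ideal.mem_span_singleton]
  obtain ⟨g₂, rfl⟩ : C c ∣ g₁ := by
    rw [C_dvd_iff_map_hom_eq_zero (Ideal.Quotient.mk (Ideal.span {c})) c hmk]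
    refine mem_nonZeroDivisors_iff_left.1 (hreg c) _ ?_
    rw [← map_mul, ← clear_denominators, map_mul, map_C, (hmk c).2 dvd_rfl, C_0, mul_zero]
  refine Ideal.mem_span_singleton.2 ⟨g₂, mul_right_cancel₀ (b := C c) ?_ ?_⟩
  · simpa using nonZeroDivisors.ne_zero hc
  · rw [clear_denominators]; ring

lemma isPrime_span_hyperbolicForm (τ R : Type*) [Fintype τ] [Nontrivial τ] [CommRing R]
    [IsDomain R] : (Ideal.span {hyperbolicForm τ R}).IsPrime := by
  refine isPrime_span_singleton_of_map_fractionRing ?_ fun c => ?_ <;> rw [map_hyperbolicForm]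
  · exact hyperbolicForm_prime_of_field _
  · exact hyperbolicForm_mem_nonZeroDivisors _

universe u

/-- The ideal generated by the copies of the polynomial `q` in disjoint sets of variables, one for
each element of `ι`. -/
def copiesIdeal (ι : Type*) {τ R : Type*} [CommRing R] (q : MvPolynomial τ R) :
    Ideal (MvPolynomial (ι × τ) R) :=
  Ideal.span (Set.range fun p => rename (Prod.mk p) q)

lemma copiesIdeal_congr {ι κ τ R : Type*} [CommRing R] (e : ι ≃ κ) (q : MvPolynomial τ R) :
    copiesIdeal κ q = (copiesIdeal ι q).comap
      (renameEquiv R (e.prodCongr (Equiv.refl τ))).toRingEquiv.symm := by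
  rw [Ideal.comap_symm, copiesIdeal, copiesIdeal, Ideal.map_span, ← Set.range_comp,
    ← e.surjective.range_comp]
  congr 2
  funext p
  simp [rename_rename, Function.comp_def]

/-- Splits off the variables of the copy indexed by `none` as coefficients. -/
def optionVariablesEquiv (ι τ R : Type*) [CommRing R] :
    MvPolynomial (Option ι × τ) R ≃ₐ[R] MvPolynomial (ι × τ) (MvPolynomial τ R) :=
  (renameEquiv R (((Equiv.optionEquivSumPUnit.{0} ι).prodCongr (Equiv.refl τ)).trans
    ((Equiv.sumProdDistrib ι PUnit τ).trans ((Equiv.refl _).sumCongr (Equiv.punitProd τ))))).trans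
    (sumAlgEquiv R _ _)

lemma optionVariablesEquiv_rename_some {ι τ R : Type*} [CommRing R] (p : ι)
    (q : MvPolynomial τ R) : optionVariablesEquiv ι τ R (rename (Prod.mk (some p)) q) =
      rename (Prod.mk p) (map C q) := by
  induction q using MvPolynomial.induction_on <;> simp_all [optionVariablesEquiv]

lemma optionVariablesEquiv_rename_none {ι τ R : Type*} [CommRing R] (q : MvPolynomial τ R) :
    optionVariablesEquiv ι τ R (rename (Prod.mk none) q) = C q := by
  induction q using MvPolynomial.induction_on <;> simp_all [optionVariablesEquiv]

lemma copiesIdeal_option {ι τ R : Type*} [CommRing R] (q : MvPolynomial τ R) :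
    copiesIdeal (Option ι) q =
      (copiesIdeal ι (map ((Ideal.Quotient.mk (Ideal.span {q})).comp C) q)).comap
        ((map (Ideal.Quotient.mk (Ideal.span {q}))).comp
          (optionVariablesEquiv ι τ R : _ →+* _)) := by
  set I := Ideal.span {q}
  set E := optionVariablesEquiv ι τ R
  set μ : MvPolynomial (Option ι × τ) R →+* MvPolynomial (ι × τ) (MvPolynomial τ R ⧸ I) :=
    (map (Ideal.Quotient.mk I)).comp (E : _ →+* _)
  have hsurj : Function.Surjective μ :=
    (map_surjective _ Ideal.Quotient.mk_surjective).comp E.surjective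
  have hsome (p : ι) : μ (rename (Prod.mk (some p)) q) =
      rename (Prod.mk p) (map ((Ideal.Quotient.mk I).comp C) q) := by
    simp [μ, E, optionVariablesEquiv_rename_some, map_rename, map_map]
  have hnone : μ (rename (Prod.mk none) q) = 0 := by
    simp [μ, E, optionVariablesEquiv_rename_none, I]
  have hker : RingHom.ker μ ≤ copiesIdeal (Option ι) q := by
    intro f hf
    have : E f ∈ RingHom.ker (map (σ := ι × τ) (Ideal.Quotient.mk I)) := hf
    rw [ker_map, Ideal.mk_ker, Ideal.map_span, Set.image_singleton,
      ← optionVariablesEquiv_rename_none, Ideal.mem_span_singleton, map_dvd_iff] at this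
    exact Ideal.mem_of_dvd _ this (Ideal.subset_span ⟨none, rfl⟩)
  have hmap : (copiesIdeal (Option ι) q).map μ =
      copiesIdeal ι (map ((Ideal.Quotient.mk I).comp C) q) := by
    have range_eq : μ '' Set.range (fun p => rename (Prod.mk p) q) = insert 0
        (Set.range fun p => rename (Prod.mk p) (map ((Ideal.Quotient.mk I).comp C) q)) := by
      ext f
      simp [Option.exists, hsome, hnone, eq_comm]
    rw [copiesIdeal, Ideal.map_span, range_eq, Ideal.span_insert_zero, copiesIdeal]
  rw [← hmap, Ideal.comap_map_of_surjective' _ hsurj, sup_eq_left.2 hker]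

theorem isPrime_copiesIdeal (ι : Type*) [Finite ι] {τ : Type u} (q : MvPolynomial τ ℤ)
    (hq : ∀ (R : Type u) [CommRing R] [IsDomain R],
      (Ideal.span {map (Int.castRingHom R) q}).IsPrime) :
    ∀ (R : Type u) [CommRing R] [IsDomain R],
      (copiesIdeal ι (map (Int.castRingHom R) q)).IsPrime := by
  induction ι using Finite.induction_empty_option with
  | of_equiv e ih =>
    intro R _ _
    have := ih R
    rw [copiesIdeal_congr e]
    infer_instance
  | h_empty =>
    intro R _ _
    rw [copiesIdeal, Set.range_eq_empty, Ideal.span_empty]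
    exact Ideal.isPrime_bot
  | h_option ih =>
    intro R _ _
    have := hq R
    have := ih (MvPolynomial τ R ⧸ Ideal.span {map (Int.castRingHom R) q})
    rw [copiesIdeal_option, map_map, RingHom.ext_int (RingHom.comp _ _) (Int.castRingHom _)]
    infer_instance

theorem isPrime_span_factorHom_diagonal (ι : Type*) [Finite ι] {n : ℕ} (hn : 2 ≤ n) (R : Type)
    [CommRing R] [IsDomain R] :
    ((Ideal.span (X '' Set.diagonal ι)).map (factorHom ι ι n R)).IsPrime := by
  have : Nontrivial (Fin n) := Fin.nontrivial_iff_two_le.2 hn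
  let e := (renameEquiv R (Equiv.prodSumDistrib ι (Fin n) (Fin n))).toRingEquiv
  have map_eq : (Ideal.span (X '' Set.diagonal ι)).map (factorHom ι ι n R) =
      (copiesIdeal ι (hyperbolicForm (Fin n) R)).comap e.symm := by
    rw [Ideal.comap_symm, copiesIdeal, Ideal.map_span, Ideal.map_span, ← Set.range_comp,
      ← Set.range_diag, ← Set.range_comp, ← Set.range_comp]
    congr 2
    funext p
    simp [e, factorHom, hyperbolicForm]
  have := isPrime_copiesIdeal ι (hyperbolicForm (Fin n) ℤ) (fun R _ _ => by
    rw [map_hyperbolicForm]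
    exact isPrime_span_hyperbolicForm _ _) R
  rw [map_hyperbolicForm] at this
  rw [map_eq]
  infer_instance

end Prime

section RankSwappingRing

variable {K : Type} [Field K] {P : Set Circle1} {n : ℕ}

lemma gen_self (p : P) : gen K P p p = 0 := by simp [gen]

lemma gen_of_ne {p q : P} (h : p ≠ q) : gen K P p q = X ⟨(p, q), h⟩ := by simp [gen, h]

lemma map_Dmat {A : Type*} [CommRing A] [Algebra K A] (f : SwapRing K P →ₐ[K] A) {m : ℕ}
    (xs ys : Fin m → P) :
    f (Dmat K P m xs ys) = Matrix.det (Matrix.of fun i j => f (gen K P (xs i) (ys j))) := by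
  rw [Dmat, AlgHom.map_det]
  rfl

section

variable {A : Type*} [CommRing A] [Algebra K A]

open Matrix

/-- The evaluation of the swapping ring at vectors `w p` and covectors `u p` in `A ^ n`: the
generator `pq` is sent to the pairing of `w p` with `u q`. It is meant for families satisfying
`w p ⬝ᵥ u p = 0`, for which it respects the relations `pp = 0`. -/
def pairingHom (w u : P → Fin n → A) : SwapRing K P →ₐ[K] A :=
  aeval fun g => w g.1.1 ⬝ᵥ u g.1.2

variable {w u : P → Fin n → A}

lemma pairingHom_gen (h : ∀ p, w p ⬝ᵥ u p = 0) (p q : P) :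
    pairingHom w u (gen K P p q) = w p ⬝ᵥ u q := by
  by_cases hpq : p = q
  · rw [hpq, gen_self, map_zero, h]
  · rw [gen_of_ne hpq, pairingHom, aeval_X]

lemma pairingHom_Dmat (h : ∀ p, w p ⬝ᵥ u p = 0) {m : ℕ} (xs ys : Fin m → P) :
    pairingHom w u (Dmat K P m xs ys) =
      ((of fun i => w (xs i)) * (of fun k j => u (ys j) k)).det := by
  refine (map_Dmat (pairingHom w u) xs ys).trans ?_
  congr 1
  ext i j
  exact pairingHom_gen h _ _

lemma Rideal_le_ker_pairingHom (h : ∀ p, w p ⬝ᵥ u p = 0) :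
    Rideal K P n ≤ RingHom.ker (pairingHom (K := K) w u) := by
  rw [Rideal, Ideal.span_le]
  rintro _ ⟨xs, ys, rfl⟩
  exact (pairingHom_Dmat h xs ys).trans (det_mul_eq_zero_of_succ _ _)

end

/-- The algebra map from the polynomial ring on all ordered pairs of points onto the swapping
ring. -/
def genHom (K : Type) [Field K] (P : Set Circle1) : MvPolynomial (P × P) K →ₐ[K] SwapRing K P :=
  aeval fun x => gen K P x.1 x.2

lemma genHom_rename_val (z : SwapRing K P) : genHom K P (rename Subtype.val z) = z := by
  have : (genHom K P).comp (rename Subtype.val) = AlgHom.id K _ := by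
    ext ⟨x, hx⟩
    simp [genHom, gen, hx]
  exact DFunLike.congr_fun this z

lemma minorIdeal_le_comap_genHom : minorIdeal P P n K ≤ (Rideal K P n).comap (genHom K P) := by
  rw [minorIdeal, Ideal.span_le]
  rintro _ ⟨xs, ys, rfl⟩
  refine Ideal.subset_span ⟨xs, ys, ?_⟩
  rw [AlgHom.map_det, Dmat]
  congr 1
  ext i j
  simp [genHom]

lemma span_diagonal_le_ker_genHom :
    Ideal.span (X '' Set.diagonal P) ≤ RingHom.ker (genHom K P) := by
  rw [Ideal.span_le]
  rintro _ ⟨⟨p, q⟩, hpq : p = q, rfl⟩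
  simp [genHom, hpq, gen_self]

variable (K P n) in
/-- The ideal expressing that the generic vector at each point pairs to zero with the generic
covector at the same point. -/
def incidenceIdeal : Ideal (MvPolynomial (P × Fin n ⊕ P × Fin n) K) :=
  (Ideal.span (X '' Set.diagonal P)).map (factorHom P P n K)

variable (K P n) in
/-- The evaluation of the swapping ring at the generic incident vectors and covectors. -/
def genericPairingHom :
    SwapRing K P →ₐ[K] MvPolynomial (P × Fin n ⊕ P × Fin n) K ⧸ incidenceIdeal K P n :=
  pairingHom (fun p k => Ideal.Quotient.mk _ (X (.inl (p, k))))
    fun q k => Ideal.Quotient.mk _ (X (.inr (q, k)))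

lemma genericPairingHom_apply (z : SwapRing K P) : genericPairingHom K P n z =
    Ideal.Quotient.mk (incidenceIdeal K P n) (factorHom P P n K (rename Subtype.val z)) := by
  have : genericPairingHom K P n = ((Ideal.Quotient.mkₐ K (incidenceIdeal K P n)).comp
      (factorHom P P n K)).comp (rename Subtype.val) := by
    ext x
    simp [genericPairingHom, pairingHom, factorHom, dotProduct]
  exact DFunLike.congr_fun this z

theorem ker_genericPairingHom [CharZero K] [Finite P] [NeZero n] :
    RingHom.ker (genericPairingHom K P n) = Rideal K P n := by
  refine le_antisymm (fun z hz => ?_) (Rideal_le_ker_pairingHom fun p => ?_)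
  · rw [RingHom.mem_ker, genericPairingHom_apply, Ideal.Quotient.eq_zero_iff_mem] at hz
    have hmem := mem_sup_ker_of_factorHom_mem_map hz
    rw [ker_factorHom] at hmem
    obtain ⟨d, hd, e, he, hde⟩ := Submodule.mem_sup.1 hmem
    rw [← genHom_rename_val z, ← hde, map_add, span_diagonal_le_ker_genHom hd, zero_add]
    exact minorIdeal_le_comap_genHom he
  · simp only [dotProduct, ← map_mul, ← map_sum]
    rw [Ideal.Quotient.eq_zero_iff_mem]
    have : factorHom P P n K (X (p, p)) ∈ incidenceIdeal K P n :=
      Ideal.mem_map_of_mem _ (Ideal.subset_span ⟨(p, p), rfl, rfl⟩)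
    simpa [factorHom] using this

theorem isPrime_Rideal [CharZero K] [Finite P] (hn : 2 ≤ n) : (Rideal K P n).IsPrime := by
  have : NeZero n := ⟨by omega⟩
  have : (incidenceIdeal K P n).IsPrime := isPrime_span_factorHom_diagonal P hn K
  rw [← ker_genericPairingHom]
  exact RingHom.ker_isPrime _

lemma finRotate_apply_ne (hn : 2 ≤ n) (k : Fin n) : finRotate n k ≠ k := by
  obtain ⟨n, rfl⟩ := Nat.exists_eq_add_of_le' hn
  simp

section

variable {A : Type*} [CommRing A]

open Matrix

variable (A) in
/-- For distinct points `r 0, …, r (n - 1)`, the covector at `r (k + 1)` (indices modulo `n`) is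
the `k`-th coordinate form, and it is zero at all other points. -/
def shiftedCovector (r : Fin n → P) (q : P) (k : Fin n) : A :=
  if q = r (finRotate n k) then 1 else 0

lemma dotProduct_shiftedCovector (hn : 2 ≤ n) {r : Fin n → P} (hr : Function.Injective r)
    {w : P → Fin n → A} (hw : ∀ i, w (r i) = Pi.single i 1) (p : P) :
    w p ⬝ᵥ shiftedCovector A r p = 0 := by
  by_cases hp : p ∈ Set.range r
  · obtain ⟨i, rfl⟩ := hp
    rw [hw, single_one_dotProduct, shiftedCovector, if_neg]
    exact fun h => finRotate_apply_ne hn i (hr h).symm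
  · have : shiftedCovector A r p = 0 := funext fun k => if_neg fun hk => hp ⟨_, hk.symm⟩
    rw [this, dotProduct_zero]

lemma isUnit_pairingHom_Dmat_self [Algebra K A] (hn : 2 ≤ n) {r : Fin n → P}
    (hr : Function.Injective r) {w : P → Fin n → A} (hw : ∀ i, w (r i) = Pi.single i 1) :
    IsUnit (pairingHom w (shiftedCovector A r) (Dmat K P n r r)) := by
  have hcovectors : (of fun k j => shiftedCovector A r (r j) k) =
      (finRotate n).toPEquiv.toMatrix := by
    ext k j
    simp [shiftedCovector, PEquiv.toMatrix_apply, hr.eq_iff, eq_comm]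
  have hvectors : (of fun i => w (r i)) = 1 := by
    ext i k
    simp [hw, Pi.single_apply, one_apply, eq_comm]
  rw [pairingHom_Dmat (dotProduct_shiftedCovector hn hr hw), hcovectors, hvectors, one_mul,
    det_permutation]
  exact (Equiv.Perm.sign _).isUnit.map (Int.castRingHom A)

end

lemma Dmat_self_notMem_Rideal (hn : 2 ≤ n) {r : Fin n → P} (hr : Function.Injective r) :
    Dmat K P n r r ∉ Rideal K P n := by
  let w (p : P) (k : Fin n) : K := if p = r k then 1 else 0
  have hw (i : Fin n) : w (r i) = Pi.single i 1 := by
    ext k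
    simp [w, hr.eq_iff, Pi.single_apply, eq_comm]
  exact fun hmem => (isUnit_pairingHom_Dmat_self hn hr hw).ne_zero
    (Rideal_le_ker_pairingHom (dotProduct_shiftedCovector hn hr hw) hmem)

end RankSwappingRing

section LinkingNumber

lemma sgnQ_of_neg {x : ℝ} (hx : x < 0) : sgnQ x = -1 := if_pos hx

lemma sgnQ_zero : sgnQ 0 = 0 := by simp [sgnQ]

lemma sgnQ_of_pos {x : ℝ} (hx : 0 < x) : sgnQ x = 1 := by simp [sgnQ, hx.not_gt, hx.ne']

lemma sgnQ_neg (x : ℝ) : sgnQ (-x) = -sgnQ x := by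
  rcases lt_trichotomy x 0 with hx | rfl | hx
  · rw [sgnQ_of_neg hx, sgnQ_of_pos (neg_pos.2 hx), neg_neg]
  · simp [sgnQ_zero]
  · rw [sgnQ_of_pos hx, sgnQ_of_neg (neg_lt_zero.2 hx)]

lemma sgnQ_add_mul_sgnQ_mul_sgnQ (x y : ℝ) :
    sgnQ (x + y) * sgnQ x * sgnQ y = sgnQ x + sgnQ y - sgnQ (x + y) := by
  rcases lt_trichotomy x 0 with hx | rfl | hx
  · rcases lt_trichotomy y 0 with hy | rfl | hy
    · simp [sgnQ_of_neg hx, sgnQ_of_neg hy, sgnQ_of_neg (add_neg hx hy)]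
    · simp [sgnQ_zero]
    · simp [sgnQ_of_neg hx, sgnQ_of_pos hy]
  · simp [sgnQ_zero]
  · rcases lt_trichotomy y 0 with hy | rfl | hy
    · simp [sgnQ_of_pos hx, sgnQ_of_neg hy]
    · simp [sgnQ_zero]
    · simp [sgnQ_of_pos hx, sgnQ_of_pos hy, sgnQ_of_pos (add_pos hx hy)]

/-- The relative position `△(p - q)` of two points of the circle cut at `o`. -/
def coordSign (o p q : Circle1) : ℚ := sgnQ (coordAt o p - coordAt o q)

lemma coordSign_swap (o p q : Circle1) : coordSign o q p = -coordSign o p q := by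
  rw [coordSign, coordSign, ← sgnQ_neg, neg_sub]

lemma linkingAt_eq_sum_coordSign (o r x s y : Circle1) : linkingAt o r x s y =
    1 / 2 * (coordSign o r y + coordSign o y x - coordSign o r s - coordSign o s x) := by
  have triple (z : Circle1) : coordSign o r x * coordSign o r z * coordSign o z x =
      coordSign o r z + coordSign o z x - coordSign o r x := by
    simpa [coordSign] using
      sgnQ_add_mul_sgnQ_mul_sgnQ (coordAt o r - coordAt o z) (coordAt o z - coordAt o x)
  change 1 / 2 * (coordSign o r x * coordSign o r y * coordSign o y x -
    coordSign o r x * coordSign o r s * coordSign o s x) = _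
  rw [triple, triple]
  ring

lemma coordAt_mem_Ico (o x : Circle1) : coordAt o x ∈ Set.Ico (0 : ℝ) 1 := by
  simpa [coordAt] using ((AddCircle.equivIco 1 0) (x - o)).2

lemma coe_coordAt (o x : Circle1) : (coordAt o x : Circle1) = x - o :=
  (AddCircle.equivIco 1 0).symm_apply_apply (x - o)

lemma coordAt_eq_of_coe_eq {o x : Circle1} {t : ℝ} (ht : t ∈ Set.Ico (0 : ℝ) 1)
    (h : (t : Circle1) = x - o) : coordAt o x = t := by
  refine (AddCircle.coe_eq_coe_iff_of_mem_Ico (p := 1) (a := 0) ?_ ?_).1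
    ((coe_coordAt o x).trans h.symm)
  · simpa using coordAt_mem_Ico o x
  · simpa using ht

lemma coordAt_change (o o' x : Circle1) : coordAt o' x = coordAt o x - coordAt o o' +
    if coordAt o x < coordAt o o' then 1 else 0 := by
  have hx := coordAt_mem_Ico o x
  have ho := coordAt_mem_Ico o o'
  refine coordAt_eq_of_coe_eq ?_ ?_
  · split_ifs <;> constructor <;> linarith [hx.1, hx.2, ho.1, ho.2]
  · split_ifs <;> simp [coe_coordAt]

lemma coordSign_change (o o' x y : Circle1) : coordSign o' x y = coordSign o x y +
    2 * ((if coordAt o x < coordAt o o' then 1 else 0) -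
      if coordAt o y < coordAt o o' then 1 else 0) := by
  obtain ⟨hx0, hx1⟩ := coordAt_mem_Ico o x
  obtain ⟨hy0, hy1⟩ := coordAt_mem_Ico o y
  rw [coordSign, coordAt_change o o' x, coordAt_change o o' y, coordSign]
  split_ifs with hx hy hy
  · simp
  · rw [sgnQ_of_pos (by linarith), sgnQ_of_neg (by linarith)]
    norm_num
  · rw [sgnQ_of_neg (by linarith), sgnQ_of_pos (by linarith)]
    norm_num
  · simp

/-- The corrections in `coordSign_change` cancel, so that any cut point may be used. -/
theorem linkQ_eq_sum_coordSign (o r x s y : Circle1) : linkQ r x s y =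
    1 / 2 * (coordSign o r y + coordSign o y x - coordSign o r s - coordSign o s x) := by
  rw [linkQ, linkingAt_eq_sum_coordSign]
  simp only [coordSign_change o (exists_cut r x s y).choose]
  ring

lemma exists_strictMonoOn_coordAt {m : ℕ} {a : ℕ → Circle1}
    (h : AnticlockwiseList ((List.range m).map fun k => a (k + 1))) :
    ∃ o, StrictMonoOn (fun k => coordAt o (a k)) (Set.Icc 1 m) := by
  obtain ⟨o, -, hchain⟩ := h
  refine ⟨o, fun k hk l hl hkl => ?_⟩
  have hpair := List.pairwise_iff_getElem.1 (List.isChain_iff_pairwise.1 hchain)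
  have hk1 := hk.1
  have hl1 := hl.1
  have hlm := hl.2
  have := hpair (k - 1) (l - 1) (by simp; omega) (by simp; omega) (by omega)
  simpa [Nat.sub_add_cancel, hk1, hl1] using this

lemma coordSign_eq_of_strictMonoOn {o : Circle1} {a : ℕ → Circle1} {s : Set ℕ}
    (h : StrictMonoOn (fun k => coordAt o (a k)) s) {k l : ℕ} (hk : k ∈ s) (hl : l ∈ s) :
    coordSign o (a k) (a l) = sgnQ ((k : ℝ) - l) := by
  rcases lt_trichotomy k l with hkl | rfl | hkl
  · rw [coordSign, sgnQ_of_neg (sub_neg.2 (h hk hl hkl)), sgnQ_of_neg (by simpa)]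
  · rw [coordSign, sub_self, sub_self]
  · rw [coordSign, sgnQ_of_pos (sub_pos.2 (h hl hk hkl)), sgnQ_of_pos (by simpa)]

lemma sEq_eq_half_sgnQ_add_sgnQ (i j i' j' : ℕ) :
    sEq i j i' j' = 1 / 2 * (sgnQ ((j : ℝ) - j') + sgnQ ((i' : ℝ) - i)) := by
  simp only [sEq, sgnQ, sub_neg, sub_eq_zero, Nat.cast_lt, Nat.cast_inj]
  split_ifs <;> first | omega | norm_num

end LinkingNumber

section Biderivation

variable {ι P A R : Type*} [Fintype ι] [CommRing A] [CommRing R] [Algebra R A]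

lemma sum_option_mul_mul_eq {u v : Option ι → A} (hu : ∑ o, u o = 0) (hv : ∑ o, v o = 0)
    (f g : Option ι → A) (c : A) {S : Option ι → Option ι → A}
    (hnone : ∀ i, S none (some i) = 1) (hsome : ∀ i, S (some i) none = -1) :
    ∑ o, ∑ o', u o * v o' * (f o + c - S o o' - g o') =
      -∑ i, ∑ i', u (some i) * v (some i') * (S none none + S (some i) (some i')) := by
  have drop : ∑ o, ∑ o', u o * v o' * (f o + c - S o o' - g o') =
      -∑ o, ∑ o', u o * v o' * S o o' := by
    have : ∑ o, ∑ o', u o * v o' * (f o + c - S o o' - g o') =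
        (∑ o, u o * (f o + c)) * (∑ o', v o') - (∑ o, u o) * (∑ o', v o' * g o') -
          ∑ o, ∑ o', u o * v o' * S o o' := by
      simp only [Finset.sum_mul_sum, ← Finset.sum_sub_distrib]
      exact Finset.sum_congr rfl fun o _ => Finset.sum_congr rfl fun o' _ => by ring
    rw [this, hu, hv]
    ring
  have split : ∑ i, ∑ i', u (some i) * v (some i') * (S none none + S (some i) (some i')) =
      (∑ i, u (some i)) * (∑ i, v (some i)) * S none none +
        ∑ i, ∑ i', u (some i) * v (some i') * S (some i) (some i') := by
    rw [Finset.sum_mul_sum]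
    simp only [Finset.sum_mul, ← Finset.sum_add_distrib]
    exact Finset.sum_congr rfl fun i _ => Finset.sum_congr rfl fun i' _ => by ring
  rw [Fintype.sum_option] at hu hv
  rw [drop, split]
  simp only [Fintype.sum_option, hnone, hsome, Finset.sum_add_distrib, mul_one, mul_neg_one,
    ← Finset.mul_sum, Finset.sum_neg_distrib, ← Finset.sum_mul, eq_neg_of_add_eq_zero_left hu,
    eq_neg_of_add_eq_zero_left hv]
  ring

lemma eq_zero_of_forall_sum_sum_mul_eq_zero [DecidableEq ι] {M Y : Matrix ι ι A} (hM : IsUnit M.det)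
    (h : ∀ j j', ∑ i, ∑ i', M i j * M i' j' * Y i i' = 0) : Y = 0 := by
  have hMu : IsUnit M := (Matrix.isUnit_iff_isUnit_det _).2 hM
  have hMt : IsUnit M.transpose := M.isUnit_transpose.2 hMu
  have : M.transpose * (Y * M) = 0 := by
    ext j j'
    simp only [Matrix.mul_apply, Matrix.transpose_apply, Matrix.zero_apply, ← h j j',
      Finset.mul_sum]
    exact Finset.sum_congr rfl fun i _ => Finset.sum_congr rfl fun i' _ => by ring
  rwa [hMt.mul_right_eq_zero, hMu.mul_left_eq_zero] at this

/-- The coefficients of the relation `x p - ∑ i, E i * x (e i) = 0` among the rows of `x` at the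
points `Option.elim · p e`. -/
def relationCoeff (E : ι → A) (o : Option ι) : A := o.elim 1 fun i => -E i

variable {x : P → P → A} {e : ι → P} {p p' : P} {E E' : ι → A}

lemma sum_relationCoeff_mul (hE : ∀ q, x p q = ∑ i, E i * x (e i) q) (q : P) :
    ∑ o : Option ι, relationCoeff E o * x (o.elim p e) q = 0 := by
  simp [relationCoeff, hE q]

lemma sum_smul_derivation_eq_sum_option {M : Type*} [AddCommGroup M] [Module A M] [Module R M]
    (D : Derivation R A M) (hE : ∀ q, x p q = ∑ i, E i * x (e i) q) (q : P) :
    ∑ i, x (e i) q • D (E i) =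
      ∑ o : Option ι, relationCoeff E o • D (x (o.elim p e) q) := by
  simp [relationCoeff, hE q, Finset.sum_add_distrib]

lemma sum_mul_biderivation_eq_sum_option (B : Derivation R A (Derivation R A A))
    (hE : ∀ q, x p q = ∑ i, E i * x (e i) q) (hE' : ∀ q, x p' q = ∑ i, E' i * x (e i) q)
    (q q' : P) :
    ∑ i, ∑ i', x (e i) q * x (e i') q' * B (E i) (E' i') =
      ∑ o : Option ι, ∑ o' : Option ι, relationCoeff E o * relationCoeff E' o' *
        B (x (o.elim p e) q) (x (o'.elim p' e) q') := by
  have left (b : A) : ∑ i, x (e i) q * B (E i) b =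
      ∑ o : Option ι, relationCoeff E o * B (x (o.elim p e) q) b := by
    simpa [-Fintype.sum_option] using congrFun (congrArg Derivation.coeFnAddMonoidHom
      (sum_smul_derivation_eq_sum_option B hE q)) b
  calc ∑ i, ∑ i', x (e i) q * x (e i') q' * B (E i) (E' i')
      = ∑ i, x (e i) q * ∑ i', x (e i') q' • B (E i) (E' i') := by
        simp [Finset.mul_sum, mul_assoc]
    _ = ∑ i, x (e i) q * ∑ o' : Option ι, relationCoeff E' o' * B (E i) (x (o'.elim p' e) q') := by
        simp only [fun i => sum_smul_derivation_eq_sum_option (B (E i)) hE' q']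
        rfl
    _ = ∑ o' : Option ι, relationCoeff E' o' * ∑ i, x (e i) q * B (E i) (x (o'.elim p' e) q') := by
        simp only [Finset.mul_sum]
        rw [Finset.sum_comm]
        simp only [mul_left_comm]
    _ = _ := by
        simp only [left, Finset.mul_sum]
        rw [Finset.sum_comm]
        exact Finset.sum_congr rfl fun o _ => Finset.sum_congr rfl fun o' _ => by ring

variable {σ : P → P → A} {h c₁ c₂ : A}

/-- Contracting `B (E i) (E' i')` with two columns of `x` gives a combination of brackets of entries
of `x`. There the signs involving the columns cancel, since `E` and `E'` come from linear relations
among the rows; what remains is the same contraction of the right-hand side. -/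
theorem biderivation_coeff_eq [DecidableEq ι] {B : Derivation R A (Derivation R A A)}
    (hB : ∀ r q s q', B (x r q) (x s q') = h * (σ r q' + σ q' q - σ r s - σ s q) *
      (c₁ * (x r q' * x s q) + c₂ * (x r q * x s q')))
    (hdet : IsUnit (Matrix.det (Matrix.of fun i j => x (e i) (e j))))
    (hE : ∀ q, x p q = ∑ i, E i * x (e i) q) (hE' : ∀ q, x p' q = ∑ i, E' i * x (e i) q)
    (hσ : ∀ i, σ p (e i) = 1) (hσ' : ∀ i, σ (e i) p' = -1) (i i' : ι) :
    B (E i) (E' i') = -h * (c₁ * (E i' * E' i) * (σ p p' + σ (e i') (e i)) +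
      c₂ * (E i * E' i') * (σ p p' + σ (e i) (e i'))) := by
  set V : ι → ι → A := fun i i' => h * (c₁ * (E i' * E' i) * (σ p p' + σ (e i') (e i)) +
      c₂ * (E i * E' i') * (σ p p' + σ (e i) (e i')))
  let Y : Matrix ι ι A := .of fun i i' => B (E i) (E' i') + V i i'
  suffices hY : Y = 0 by
    have : B (E i) (E' i') + V i i' = 0 := congrFun₂ hY i i'
    rw [eq_neg_of_add_eq_zero_left this, neg_mul]
  refine eq_zero_of_forall_sum_sum_mul_eq_zero hdet fun j j' => ?_
  let row (o : Option ι) : P := o.elim p e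
  let row' (o : Option ι) : P := o.elim p' e
  have collapse (q q' : P) := sum_option_mul_mul_eq (sum_relationCoeff_mul hE q)
    (sum_relationCoeff_mul hE' q') (fun o => σ (row o) (e j')) (fun o => σ (row' o) (e j))
    (σ (e j') (e j)) (S := fun o o' => σ (row o) (row' o')) hσ hσ'
  have hsum : ∑ i, ∑ i', x (e i) (e j) * x (e i') (e j') * B (E i) (E' i') =
      -∑ i, ∑ i', x (e i) (e j) * x (e i') (e j') * V i i' := by
    calc _ = h * c₁ * (∑ o, ∑ o', relationCoeff E o * x (row o) (e j') *
            (relationCoeff E' o' * x (row' o') (e j)) *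
            (σ (row o) (e j') + σ (e j') (e j) - σ (row o) (row' o') - σ (row' o') (e j))) +
          h * c₂ * (∑ o, ∑ o', relationCoeff E o * x (row o) (e j) *
            (relationCoeff E' o' * x (row' o') (e j')) *
            (σ (row o) (e j') + σ (e j') (e j) - σ (row o) (row' o') - σ (row' o') (e j))) := by
          rw [sum_mul_biderivation_eq_sum_option B hE hE']
          simp only [Finset.mul_sum, ← Finset.sum_add_distrib, hB]
          exact Finset.sum_congr rfl fun o _ => Finset.sum_congr rfl fun o' _ => by ring
      _ = _ := by
          rw [collapse, collapse, Finset.sum_comm (s := Finset.univ (α := ι))]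
          simp only [relationCoeff, row, row', Option.elim, Finset.mul_sum, mul_neg,
            ← Finset.sum_neg_distrib, ← Finset.sum_add_distrib, V]
          exact Finset.sum_congr rfl fun i _ => Finset.sum_congr rfl fun i' _ => by ring
  simpa [Y, mul_add, Finset.sum_add_distrib, ← eq_neg_iff_add_eq_zero] using hsum

end Biderivation

section Cramer

variable {P A : Type*} [CommRing A] {n : ℕ}

lemma exists_eq_sum_mul_of_det_eq_zero {x : P → P → A}
    (hminor : ∀ xs ys : Fin (n + 1) → P, Matrix.det (.of fun i j => x (xs i) (ys j)) = 0)
    {e : Fin n → P} (hdet : IsUnit (Matrix.det (.of fun i j => x (e i) (e j)))) :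
    ∃ E : P → Fin n → A, ∀ p q, x p q = ∑ i, E p i * x (e i) q := by
  let M : Matrix (Fin n) (Fin n) A := .of fun i j => x (e i) (e j)
  let : Invertible M.det := hdet.invertible
  let : Invertible M := M.invertibleOfDetInvertible
  refine ⟨fun p => Matrix.vecMul (fun j => x p (e j)) (⅟M), fun p q => ?_⟩
  let row : Matrix (Fin 1) (Fin n) A := .of fun _ j => x p (e j)
  let col : Matrix (Fin n) (Fin 1) A := .of fun i _ => x (e i) q
  let corner : Matrix (Fin 1) (Fin 1) A := .of fun _ _ => x p q
  have hblocks : (Matrix.fromBlocks M col row corner).det = 0 := by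
    rw [← Matrix.det_reindex_self finSumFinEquiv,
      ← hminor (Sum.elim e (fun _ => p) ∘ finSumFinEquiv.symm)
        (Sum.elim e (fun _ => q) ∘ finSumFinEquiv.symm)]
    congr 1
    ext i j
    rw [Matrix.reindex_apply, Matrix.submatrix_apply, Matrix.of_apply, Function.comp, Function.comp]
    rcases finSumFinEquiv.symm i with _ | _ <;> rcases finSumFinEquiv.symm j with _ | _ <;> rfl
  rw [Matrix.det_fromBlocks₁₁, hdet.mul_right_eq_zero, Matrix.det_fin_one, Matrix.sub_apply,
    sub_eq_zero] at hblocks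
  exact hblocks

variable {x : P → P → A}

lemma det_update_row_eq {e : Fin n → P} {p : P} {E : Fin n → A}
    (hE : ∀ q, x p q = ∑ k, E k * x (e k) q) (i : Fin n) (f : Fin n → P) :
    Matrix.det (.of fun k l => x (Function.update e i p k) (f l)) =
      E i * Matrix.det (.of fun k l => x (e k) (f l)) := by
  have : Matrix.of (fun k l => x (Function.update e i p k) (f l)) =
      (Matrix.of fun k l => x (e k) (f l)).updateRow i
        (∑ k, E k • (Matrix.of fun k l => x (e k) (f l)) k) := by
    ext k l
    rcases eq_or_ne k i with rfl | hk
    · simp [hE]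
    · simp [hk]
  rw [this, Matrix.det_updateRow_sum, smul_eq_mul]

end Cramer

section HatRows

variable {m n : ℕ} {a : ℕ → Circle1}

/-- The reordering `(1, …, i - 1, i + 1, …, n, i)` of `(1, …, n)`, as a self-map of
`Fin n = {0, …, n - 1}`. -/
def hatIndex {i : ℕ} (h1 : 1 ≤ i) (h2 : i ≤ n) (k : Fin n) : Fin n :=
  if hk : (k : ℕ) < n - 1 then
    if (k : ℕ) + 1 < i then k else ⟨k + 1, by omega⟩
  else ⟨i - 1, by omega⟩

lemma hatIndex_injective {i : ℕ} (h1 : 1 ≤ i) (h2 : i ≤ n) :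
    Function.Injective (hatIndex h1 h2) := by
  intro k l h
  ext
  simp only [hatIndex] at h
  split_ifs at h <;> simp only [Fin.ext_iff] at h <;> omega

/-- `hatIndex` as a permutation. -/
def hatPerm {i : ℕ} (h1 : 1 ≤ i) (h2 : i ≤ n) : Equiv.Perm (Fin n) :=
  Equiv.ofBijective _ (Finite.injective_iff_bijective.1 (hatIndex_injective h1 h2))

lemma hatRows_eq_update_comp_hatPerm (hm : n < m) {i last : ℕ} (h1 : 1 ≤ i) (h2 : i ≤ n)
    (l1 : 1 ≤ last) (l2 : last ≤ m) : hatRows m n a i last hm h2 l1 l2 =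
      Function.update (vTup m n a hm.le) ⟨i - 1, by omega⟩ (mkP m a last l1 l2) ∘
        hatPerm h1 h2 := by
  funext k
  rw [Function.comp_apply, hatPerm, Equiv.ofBijective_apply]
  unfold hatIndex hatRows
  split_ifs with hk hki
  · rw [Function.update_of_ne (by simp [Fin.ext_iff]; omega)]
    rfl
  · rw [Function.update_of_ne (by simp [Fin.ext_iff]; omega)]
    rfl
  · rw [Function.update_self]

lemma hatRows_self_eq_vTup_comp_hatPerm (hm : n < m) {i : ℕ} (h1 : 1 ≤ i) (h2 : i ≤ n) :
    hatRows m n a i i hm h2 h1 (h2.trans hm.le) = vTup m n a hm.le ∘ hatPerm h1 h2 := by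
  have : mkP m a i h1 (h2.trans hm.le) = vTup m n a hm.le ⟨i - 1, by omega⟩ := by
    simp [vTup, Nat.sub_add_cancel h1]
  rw [hatRows_eq_update_comp_hatPerm hm h1 h2, this, Function.update_eq_self]

variable {K : Type} [Field K] {P : Set Circle1}

lemma Dmat_comp_perm (σ : Equiv.Perm (Fin n)) (xs ys : Fin n → P) :
    Dmat K P n (xs ∘ σ) ys = Equiv.Perm.sign σ * Dmat K P n xs ys :=
  Matrix.det_permute σ (.of fun i j => gen K P (xs i) (ys j))

/-- The point `a_j` of the coordinate `m_{ij}`. -/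
def colPoint (a : ℕ → Circle1) (g : GIdx m n) : a '' Set.Icc 1 m :=
  mkP m a g.1.2 (Nat.one_le_of_lt g.2.2.2.1) g.2.2.2.2

/-- The position in `(a_1, …, a_n)` of the point `a_i` of the coordinate `m_{ij}`. -/
def rowIndex (g : GIdx m n) : Fin n := ⟨g.1.1 - 1, by have := g.2; omega⟩

/-- The two hat tuples are obtained from `(a_1, …, a_n)` and from its modification at `a_i` by the
same permutation, so that its sign cancels. -/
lemma mul_Dmat_vTup_eq {Q : Type*} [CommRing Q] [Algebra K Q]
    (t : SwapRing K (a '' Set.Icc 1 m) →ₐ[K] Q) (hm : n < m) (g : GIdx m n) {y : Q}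
    (h : y * t (Dmat K _ n (hatRows m n a g.1.1 g.1.1 hm g.2.2.1 g.2.1 (g.2.2.1.trans hm.le))
        (vTup m n a hm.le)) =
      t (Dmat K _ n (hatRows m n a g.1.1 g.1.2 hm g.2.2.1 (Nat.one_le_of_lt g.2.2.2.1) g.2.2.2.2)
        (vTup m n a hm.le))) :
    y * t (Dmat K _ n (vTup m n a hm.le) (vTup m n a hm.le)) =
      t (Dmat K _ n (Function.update (vTup m n a hm.le) (rowIndex g) (colPoint a g))
        (vTup m n a hm.le)) := by
  have hsign : IsUnit ((Equiv.Perm.sign (hatPerm g.2.1 g.2.2.1) : ℤ) : Q) :=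
    (Equiv.Perm.sign _).isUnit.map (Int.castRingHom Q)
  rw [hatRows_self_eq_vTup_comp_hatPerm, hatRows_eq_update_comp_hatPerm hm g.2.1, Dmat_comp_perm,
    Dmat_comp_perm, map_mul, map_mul, map_intCast, mul_left_comm] at h
  exact hsign.mul_left_cancel h

end HatRows

section PolynomialBiderivation

variable {R A : Type*} [CommRing R] [CommRing A] [Algebra R A]

/-- Evaluation of derivations at `b`, a linear map. Composing a biderivation with it fixes the
second argument of the biderivation. -/
def derivationEval (b : A) : Derivation R A A →ₗ[A] A where
  toFun D := D b
  map_add' _ _ := rfl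
  map_smul' _ _ := rfl

theorem mkDerivation_mkDerivation_apply {τ : Type*} (c : τ → τ → MvPolynomial τ R)
    (f g : MvPolynomial τ R) :
    mkDerivation R (fun k => mkDerivation R (c k)) f g =
      mkDerivation R (fun k => mkDerivation R (c k) g) f := by
  have h : (derivationEval g).compDer (mkDerivation R fun k => mkDerivation R (c k)) =
      mkDerivation R (fun k => mkDerivation R (c k) g) :=
    derivation_ext fun k => by
      rw [mkDerivation_X]
      exact congrArg (fun D => D g) (mkDerivation_X R (fun k => mkDerivation R (c k)) k)
  exact congrArg (fun D => D f) h

variable {Q τ : Type*} [CommRing Q] [Algebra R Q]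

theorem map_derivation_eq_of_X {θ : MvPolynomial τ R →ₐ[R] Q}
    {d : Derivation R (MvPolynomial τ R) (MvPolynomial τ R)} {δ : Derivation R Q Q}
    (h : ∀ k, θ (d (X k)) = δ (θ (X k))) (f : MvPolynomial τ R) : θ (d f) = δ (θ f) := by
  induction f using MvPolynomial.induction_on with
  | C c => rw [← algebraMap_eq, d.map_algebraMap, map_zero, θ.commutes, δ.map_algebraMap]
  | add p q hp hq => simp only [map_add, hp, hq]
  | mul_X p k hp => simp only [Derivation.leibniz, map_mul, map_add, smul_eq_mul, hp, h]

theorem map_biderivation_eq_of_X {θ : MvPolynomial τ R →ₐ[R] Q}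
    {D : Derivation R (MvPolynomial τ R) (Derivation R (MvPolynomial τ R) (MvPolynomial τ R))}
    {B : Derivation R Q (Derivation R Q Q)}
    (h : ∀ k l, θ (D (X k) (X l)) = B (θ (X k)) (θ (X l))) (f g : MvPolynomial τ R) :
    θ (D f g) = B (θ f) (θ g) :=
  map_derivation_eq_of_X (d := (derivationEval g).compDer D)
    (δ := (derivationEval (θ g)).compDer B) (fun k => map_derivation_eq_of_X (h k) g) f

end PolynomialBiderivation

section Fractions

variable {K S Q : Type*} [CommRing K] [CommRing S] [Algebra K S] [CommRing Q] [Algebra K Q]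
  {t : S →ₐ[K] Q}

theorem leibniz_eq_zero_of_map_eq_zero (hfrac : ∀ x, ∃ s b, IsUnit (t s) ∧ t s * x = t b)
    {f : Q → Q} (hf : ∀ x y, f (x * y) = x * f y + y * f x) (h : ∀ s, f (t s) = 0) (x : Q) :
    f x = 0 := by
  obtain ⟨s, b, hs, hb⟩ := hfrac x
  have hx := hf (t s) x
  rw [hb, h, h, mul_zero, add_zero] at hx
  exact hs.mul_right_eq_zero.mp hx.symm

theorem leibniz_add (hfrac : ∀ x, ∃ s b, IsUnit (t s) ∧ t s * x = t b)
    {f : Q → Q} (hf : ∀ x y, f (x * y) = x * f y + y * f x)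
    (h : ∀ s s', f (t s + t s') = f (t s) + f (t s')) (x y : Q) : f (x + y) = f x + f y := by
  obtain ⟨s, b, hs, hb⟩ := hfrac x
  obtain ⟨s', b', hs', hb'⟩ := hfrac y
  have hx : t (s * s') * x = t (s' * b) := by rw [map_mul, map_mul, ← hb]; ring
  have hy : t (s * s') * y = t (s * b') := by rw [map_mul, map_mul, ← hb']; ring
  have hadd : f (t (s * s') * (x + y)) = f (t (s * s') * x) + f (t (s * s') * y) := by
    rw [mul_add, hx, hy, h]
  simp only [hf (t (s * s'))] at hadd
  refine IsUnit.mul_left_cancel (a := t (s * s')) (by rw [map_mul]; exact hs.mul hs') ?_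
  linear_combination hadd

theorem exists_derivation_of_leibniz (hfrac : ∀ x, ∃ s b, IsUnit (t s) ∧ t s * x = t b)
    {f : Q → Q} (hf : ∀ x y, f (x * y) = x * f y + y * f x)
    (hadd : ∀ s s', f (t s + t s') = f (t s) + f (t s')) (hconst : ∀ c, f (algebraMap K Q c) = 0) :
    ∃ D : Derivation K Q Q, ∀ x, D x = f x :=
  ⟨Derivation.mk'
    { toFun := f
      map_add' := leibniz_add hfrac hf hadd
      map_smul' := fun c x => by
        rw [Algebra.smul_def, hf, hconst, mul_zero, add_zero, RingHom.id_apply, Algebra.smul_def] }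
    hf, fun _ => rfl⟩

theorem exists_derivation_right_of_leibniz
    (hfrac : ∀ x, ∃ s b, IsUnit (t s) ∧ t s * x = t b) {D : S → Derivation K S S} {B : Q → Q → Q}
    (hBD : ∀ s s', B (t s) (t s') = t (D s s'))
    (hleft : ∀ x y z, B (x * y) z = x * B y z + y * B x z)
    (hright : ∀ x y z, B x (y * z) = y * B x z + z * B x y) (x : Q) :
    ∃ δ : Derivation K Q Q, ∀ y, δ y = B x y := by
  refine exists_derivation_of_leibniz hfrac (hright x) (fun s s' => ?_) fun c => ?_
  · refine sub_eq_zero.mp (leibniz_eq_zero_of_map_eq_zero hfrac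
      (f := fun x => B x (t s + t s') - (B x (t s) + B x (t s'))) (fun x y => ?_) (fun r => ?_) x)
    · simp only [hleft]; ring
    · simp only [← map_add, hBD, sub_self]
  · refine leibniz_eq_zero_of_map_eq_zero hfrac (f := fun x => B x (algebraMap K Q c))
      (fun x y => hleft x y _) (fun r => ?_) x
    rw [← t.commutes, hBD, Derivation.map_algebraMap, map_zero]

theorem exists_biderivation_of_leibniz
    (hfrac : ∀ x, ∃ s b, IsUnit (t s) ∧ t s * x = t b) {D : Derivation K S (Derivation K S S)}
    {B : Q → Q → Q} (hBD : ∀ s s', B (t s) (t s') = t (D s s'))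
    (hleft : ∀ x y z, B (x * y) z = x * B y z + y * B x z)
    (hright : ∀ x y z, B x (y * z) = y * B x z + z * B x y) :
    ∃ B' : Derivation K Q (Derivation K Q Q), ∀ x y, B' x y = B x y := by
  choose δ hδ using exists_derivation_right_of_leibniz hfrac hBD hleft hright
  choose ε hε using exists_derivation_right_of_leibniz hfrac (B := fun y x => B x y)
    (D := fun s' => (derivationEval s').compDer D) (fun s s' => hBD s' s)
    (fun x y z => hright z x y) (fun x y z => hleft y z x)
  refine ⟨Derivation.mk' { toFun := δ, map_add' := fun x y => ?_, map_smul' := fun c x => ?_ }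
    fun x y => ?_, hδ⟩ <;> ext z
  · rw [Derivation.add_apply, hδ, hδ, hδ, ← hε, ← hε, ← hε, map_add]
  · rw [Derivation.smul_apply, hδ, hδ, ← hε, ← hε, Derivation.map_smul, RingHom.id_apply]
  · simp only [LinearMap.coe_mk, AddHom.coe_mk, Derivation.add_apply, Derivation.smul_apply, hδ,
      hleft, smul_eq_mul]

end Fractions

section SwappingBracket

variable {K : Type} [Field K] {P : Set Circle1} {n : ℕ}

/-- The canonical map `Z(P) → Q_n(P)`, as a homomorphism of `K`-algebras. -/
def toQnₐ (K : Type) [Field K] (P : Set Circle1) (n : ℕ) : SwapRing K P →ₐ[K] QnRing K P n :=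
  (IsScalarTower.toAlgHom K (ZnRing K P n) (QnRing K P n)).comp
    (Ideal.Quotient.mkₐ K (Rideal K P n))

theorem toQnₐ_eq_zero_iff {z : SwapRing K P} : toQnₐ K P n z = 0 ↔ z ∈ Rideal K P n := by
  have hinj : Function.Injective (algebraMap (ZnRing K P n) (QnRing K P n)) :=
    IsLocalization.injective (QnRing K P n) (le_refl (nonZeroDivisors (ZnRing K P n)))
  rw [← Ideal.Quotient.eq_zero_iff_mem]
  exact map_eq_zero_iff _ hinj

theorem exists_isUnit_toQnₐ_mul_eq (x : QnRing K P n) :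
    ∃ s b, IsUnit (toQnₐ K P n s) ∧ toQnₐ K P n s * x = toQnₐ K P n b := by
  obtain ⟨⟨b, s, hs⟩, h⟩ := IsLocalization.surj (nonZeroDivisors (ZnRing K P n)) x
  obtain ⟨b, rfl⟩ := Ideal.Quotient.mk_surjective b
  obtain ⟨s, rfl⟩ := Ideal.Quotient.mk_surjective s
  exact ⟨s, b, IsLocalization.map_units (QnRing K P n) ⟨_, hs⟩,
    (mul_comm (toQnₐ K P n s) x).trans h⟩

variable {c₁ c₂ : K} {Bq : QnRing K P n → QnRing K P n → QnRing K P n}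

theorem exists_biderivation_of_isQnBracket (h : IsQnBracket K P n c₁ c₂ Bq) :
    ∃ B : Derivation K (QnRing K P n) (Derivation K (QnRing K P n) (QnRing K P n)),
      ∀ x y, B x y = Bq x y :=
  exists_biderivation_of_leibniz (t := toQnₐ K P n) (B := Bq) exists_isUnit_toQnₐ_mul_eq
    (D := mkDerivation K fun g => mkDerivation K (genBr K P c₁ c₂ g))
    (fun s s' => by
      rw [mkDerivation_mkDerivation_apply]
      exact h.1 s s') h.2.1 h.2.2

theorem biderivation_map_gen [CharZero K] {Q : Type*} [CommRing Q] [Algebra K Q]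
    {t : SwapRing K P →ₐ[K] Q} {B : Derivation K Q (Derivation K Q Q)}
    (h : ∀ z z', B (t z) (t z') = t (swapBr K P c₁ c₂ z z')) (o : Circle1) (r q s q' : P) :
    B (t (gen K P r q)) (t (gen K P s q')) =
      algebraMap K Q (1 / 2) *
        (algebraMap K Q (coordSign o r q' : ℚ) + algebraMap K Q (coordSign o q' q : ℚ)
          - algebraMap K Q (coordSign o r s : ℚ) - algebraMap K Q (coordSign o s q : ℚ)) *
        (algebraMap K Q c₁ * (t (gen K P r q') * t (gen K P s q)) +
          algebraMap K Q c₂ * (t (gen K P r q) * t (gen K P s q'))) := by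
  rcases eq_or_ne r q with rfl | hrq
  · rw [gen_self, map_zero, map_zero, Derivation.zero_apply, coordSign_swap o r q',
      coordSign_swap o s r]
    push_cast [map_neg]
    ring
  rcases eq_or_ne s q' with rfl | hsq
  · rw [gen_self, map_zero, map_zero]
    ring
  have hbr : swapBr K P c₁ c₂ (gen K P r q) (gen K P s q') = genBr K P c₁ c₂ ⟨(r, q), hrq⟩
      ⟨(s, q'), hsq⟩ := by
    rw [gen_of_ne hrq, gen_of_ne hsq, swapBr, mkDerivation_X, mkDerivation_X]
  have hlink : (linkQ r q s q' : K) = 1 / 2 *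
      (coordSign o r q' + coordSign o q' q - coordSign o r s - coordSign o s q : ℚ) := by
    rw [linkQ_eq_sum_coordSign o]
    push_cast
    rfl
  rw [h, hbr, genBr, hlink]
  push_cast
  simp only [Algebra.smul_def, map_add, map_sub, map_mul, AlgHom.commutes]

end SwappingBracket

section Injectivity

theorem injective_of_mul_map_eq {K S Q τ : Type*} [CommRing K] [CommRing S] [Algebra K S]
    [CommRing Q] [Algebra K Q] {θ : MvPolynomial τ K →ₐ[K] Q} {t : S →ₐ[K] Q}
    {φ : S →ₐ[K] MvPolynomial τ K} (hker : RingHom.ker t ≤ RingHom.ker φ) {d : S}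
    (hd : φ d ∈ nonZeroDivisors (MvPolynomial τ K)) {z : τ → S}
    (hθ : ∀ k, θ (X k) * t d = t (z k)) (hφ : ∀ k, φ (z k) = X k * φ d) :
    Function.Injective θ := by
  have lift (f : MvPolynomial τ K) : ∃ N y, θ f * t d ^ N = t y ∧ φ y = f * φ d ^ N := by
    induction f using MvPolynomial.induction_on with
    | C c =>
      refine ⟨0, algebraMap K S c, ?_, ?_⟩
      · rw [pow_zero, mul_one, t.commutes, ← algebraMap_eq, θ.commutes]
      · rw [pow_zero, mul_one, φ.commutes, algebraMap_eq]
    | add f g hf hg =>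
      obtain ⟨N, y, hy, hφy⟩ := hf
      obtain ⟨N', y', hy', hφy'⟩ := hg
      refine ⟨N + N', y * d ^ N' + y' * d ^ N, ?_, ?_⟩
      · simp only [map_add, map_mul, map_pow, ← hy, ← hy']
        ring
      · simp only [map_add, map_mul, map_pow, hφy, hφy']
        ring
    | mul_X f k hf =>
      obtain ⟨N, y, hy, hφy⟩ := hf
      refine ⟨N + 1, y * z k, ?_, ?_⟩
      · rw [map_mul, map_mul, ← hy, ← hθ]
        ring
      · rw [map_mul, hφy, hφ]
        ring
  rw [injective_iff_map_eq_zero]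
  intro f hf
  obtain ⟨N, y, hy, hφy⟩ := lift f
  have hφy0 : φ y = 0 := hker (by rw [RingHom.mem_ker, ← hy, hf, zero_mul])
  exact (mul_right_mem_nonZeroDivisors_eq_zero_iff (pow_mem hd N)).mp (hφy.symm.trans hφy0)

open Matrix

theorem pairingHom_Dmat_update {K : Type} {A : Type*} [Field K] [CommRing A] [Algebra K A]
    {P : Set Circle1} {n : ℕ} {w u : P → Fin n → A} (h : ∀ p, w p ⬝ᵥ u p = 0) {r : Fin n → P}
    (hw : ∀ i, w (r i) = Pi.single i 1) (i : Fin n) (p : P) (ys : Fin n → P) :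
    pairingHom w u (Dmat K P n (Function.update r i p) ys) =
      w p i * pairingHom w u (Dmat K P n r ys) := by
  have hrow (q : P) : pairingHom w u (gen K P p q) =
      ∑ k, w p k * pairingHom w u (gen K P (r k) q) := by
    simp only [pairingHom_gen h, hw, single_one_dotProduct]
    rfl
  rw [map_Dmat, map_Dmat]
  exact det_update_row_eq (x := fun p q => pairingHom w u (gen K P p q)) hrow i ys

variable {K : Type} [Field K] {m n : ℕ} {a : ℕ → Circle1} {Q : Type*} [CommRing Q] [Algebra K Q]
  {t : SwapRing K (a '' Set.Icc 1 m) →ₐ[K] Q} {θ : MvPolynomial (GIdx m n) K →ₐ[K] Q}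

/-- An index `k` with `p = a_k`. -/
def pointIndex (p : a '' Set.Icc 1 m) : ℕ := p.2.choose

lemma pointIndex_mem_Icc (p : a '' Set.Icc 1 m) : pointIndex p ∈ Set.Icc 1 m :=
  p.2.choose_spec.1

lemma pointIndex_mkP (ha : Set.InjOn a (Set.Icc 1 m)) {k : ℕ} (h1 : 1 ≤ k) (h2 : k ≤ m) :
    pointIndex (mkP m a k h1 h2) = k :=
  ha (pointIndex_mem_Icc _) ⟨h1, h2⟩ (mkP m a k h1 h2).2.choose_spec.2

lemma vTup_injective (ha : Set.InjOn a (Set.Icc 1 m)) (hnm : n ≤ m) :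
    Function.Injective (vTup m n a hnm) := by
  intro k l h
  have := congrArg pointIndex h
  rw [vTup, vTup, pointIndex_mkP ha, pointIndex_mkP ha] at this
  exact Fin.ext (by omega)

variable (K n) in
/-- The generic point of the big cell of the Grassmannian, as `m` vectors with entries in
`K[m_{ij}]`: `a_1, …, a_n` carry the standard basis, and `a_j` with `n < j` carries
`(m_{1j}, …, m_{nj})`. -/
def cellVector (p : a '' Set.Icc 1 m) (i : Fin n) : MvPolynomial (GIdx m n) K :=
  if h : n < pointIndex p then
    X ⟨(i + 1, pointIndex p), by omega, i.isLt, h, (pointIndex_mem_Icc p).2⟩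
  else if pointIndex p = i + 1 then 1 else 0

lemma cellVector_vTup (ha : Set.InjOn a (Set.Icc 1 m)) (hnm : n ≤ m) (i : Fin n) :
    cellVector K n (vTup m n a hnm i) = Pi.single i 1 := by
  ext1 k
  have hidx : pointIndex (vTup m n a hnm i) = i + 1 := pointIndex_mkP ha _ _
  rw [cellVector, dif_neg (by omega), hidx, Pi.single_apply]
  simp only [add_left_inj, Fin.ext_iff, eq_comm]

lemma cellVector_colPoint (ha : Set.InjOn a (Set.Icc 1 m)) (g : GIdx m n) :
    cellVector K n (colPoint a g) (rowIndex g) = X g := by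
  have hidx : pointIndex (colPoint a g) = g.1.2 := pointIndex_mkP ha _ _
  rw [cellVector, dif_pos (hidx ▸ g.2.2.2.1)]
  congr 1
  exact Subtype.ext (Prod.ext (Nat.sub_add_cancel g.2.1) hidx)

/-- Evaluating `Z(P)` at the generic point of the big cell inverts `θ` up to powers of
`Δ((a_1, …, a_n), (a_1, …, a_n))`. -/
theorem injective_of_mul_Dmat_vTup_eq (hn : 2 ≤ n) (hnm : n ≤ m) (ha : Set.InjOn a (Set.Icc 1 m))
    (ht : ∀ z, t z = 0 → z ∈ Rideal K (a '' Set.Icc 1 m) n)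
    (hθ : ∀ g, θ (X g) * t (Dmat K _ n (vTup m n a hnm) (vTup m n a hnm)) =
      t (Dmat K _ n (Function.update (vTup m n a hnm) (rowIndex g) (colPoint a g))
        (vTup m n a hnm))) :
    Function.Injective θ := by
  have hv := vTup_injective ha hnm
  have hw := cellVector_vTup (K := K) ha hnm
  have hincidence := dotProduct_shiftedCovector hn hv hw
  refine injective_of_mul_map_eq (fun z hz => Rideal_le_ker_pairingHom hincidence (ht z hz))
    (isUnit_pairingHom_Dmat_self hn hv hw).mem_nonZeroDivisors hθ fun g => ?_
  rw [pairingHom_Dmat_update hincidence hw, cellVector_colPoint ha]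

end Injectivity

section PoissonMap

variable {K : Type} [Field K] {n : ℕ}

lemma isUnit_toQnₐ_Dmat_self [CharZero K] {P : Set Circle1} [Finite P] (hn : 2 ≤ n)
    {r : Fin n → P} (hr : Function.Injective r) : IsUnit (toQnₐ K P n (Dmat K P n r r)) := by
  have := isPrime_Rideal (K := K) (P := P) hn
  have hne : toZn K P n (Dmat K P n r r) ≠ 0 :=
    fun h => Dmat_self_notMem_Rideal hn hr (Ideal.Quotient.eq_zero_iff_mem.mp h)
  exact IsLocalization.map_units (QnRing K P n)
    (⟨_, mem_nonZeroDivisors_of_ne_zero hne⟩ : nonZeroDivisors (ZnRing K P n))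

section

variable {P : Set Circle1} {Q : Type*} [CommRing Q] [Algebra K Q] {t : SwapRing K P →ₐ[K] Q}
  {r : Fin n → P}

lemma exists_map_gen_eq_sum (ht : ∀ z ∈ Rideal K P n, t z = 0)
    (hdet : IsUnit (t (Dmat K P n r r))) :
    ∃ E : P → Fin n → Q, ∀ p q, t (gen K P p q) = ∑ i, E p i * t (gen K P (r i) q) := by
  rw [map_Dmat] at hdet
  refine exists_eq_sum_mul_of_det_eq_zero (x := fun p q => t (gen K P p q)) (fun xs ys => ?_) hdet
  rw [← map_Dmat]
  exact ht _ (Ideal.subset_span ⟨xs, ys, rfl⟩)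

lemma eq_of_mul_map_Dmat_eq (hdet : IsUnit (t (Dmat K P n r r))) {p : P} {E : Fin n → Q}
    (hE : ∀ q, t (gen K P p q) = ∑ i, E i * t (gen K P (r i) q)) {i : Fin n} {y : Q}
    (hy : y * t (Dmat K P n r r) = t (Dmat K P n (Function.update r i p) r)) : y = E i := by
  refine hdet.mul_right_cancel (hy.trans ?_)
  rw [map_Dmat, map_Dmat]
  exact det_update_row_eq (x := fun p q => t (gen K P p q)) hE i r

end

variable {m : ℕ} {a : ℕ → Circle1} {o : Circle1}

lemma coe_vTup_rowIndex (hnm : n ≤ m) (g : GIdx m n) :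
    (vTup m n a hnm (rowIndex g) : Circle1) = a g.1.1 :=
  congrArg a (Nat.sub_add_cancel g.2.1)

lemma fst_mem_Icc (hnm : n ≤ m) (g : GIdx m n) : g.1.1 ∈ Set.Icc 1 m :=
  ⟨g.2.1, g.2.2.1.trans hnm⟩

lemma snd_mem_Icc (g : GIdx m n) : g.1.2 ∈ Set.Icc 1 m :=
  ⟨Nat.one_le_of_lt g.2.2.2.1, g.2.2.2.2⟩

variable (ho : StrictMonoOn (fun k => coordAt o (a k)) (Set.Icc 1 m))

include ho

lemma coordSign_colPoint_vTup (hnm : n ≤ m) (g : GIdx m n) (i : Fin n) :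
    coordSign o (colPoint a g) (vTup m n a hnm i) = 1 := by
  have hij : (i : ℕ) + 1 < g.1.2 := (Nat.succ_le_of_lt i.isLt).trans_lt g.2.2.2.1
  refine (coordSign_eq_of_strictMonoOn ho (snd_mem_Icc g) ⟨by omega, by omega⟩).trans
    (sgnQ_of_pos ?_)
  rwa [sub_pos, Nat.cast_lt]

lemma sEq_eq_half_coordSign (hnm : n ≤ m) (g g' : GIdx m n) :
    sEq g.1.1 g.1.2 g'.1.1 g'.1.2 = 1 / 2 * (coordSign o (colPoint a g) (colPoint a g') +
      coordSign o (vTup m n a hnm (rowIndex g')) (vTup m n a hnm (rowIndex g))) := by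
  rw [sEq_eq_half_sgnQ_add_sgnQ, coe_vTup_rowIndex, coe_vTup_rowIndex,
    coordSign_eq_of_strictMonoOn ho (fst_mem_Icc hnm g') (fst_mem_Icc hnm g),
    ← coordSign_eq_of_strictMonoOn ho (snd_mem_Icc g) (snd_mem_Icc g')]
  rfl

lemma linkQ_eq_half_coordSign (hnm : n ≤ m) (g g' : GIdx m n) :
    linkQ (a g.1.1) (a g.1.2) (a g'.1.1) (a g'.1.2) =
      -(1 / 2) * (coordSign o (colPoint a g) (colPoint a g') +
        coordSign o (vTup m n a hnm (rowIndex g)) (vTup m n a hnm (rowIndex g'))) := by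
  have hsign := coordSign_colPoint_vTup ho hnm g' (rowIndex g)
  have hsign' := coordSign_colPoint_vTup ho hnm g (rowIndex g')
  have hcol (g : GIdx m n) : (colPoint a g : Circle1) = a g.1.2 := rfl
  simp only [coe_vTup_rowIndex, hcol] at hsign hsign' ⊢
  rw [linkQ_eq_sum_coordSign o, coordSign_swap o (a g'.1.2) (a g.1.1),
    coordSign_swap o (a g.1.2) (a g'.1.1), coordSign_swap o (a g.1.2) (a g'.1.2), hsign, hsign']
  ring

lemma biderivation_map_gen_coeff [CharZero K] (hnm : n ≤ m) {al be : K} {Q : Type*} [CommRing Q]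
    [Algebra K Q] {t : SwapRing K (a '' Set.Icc 1 m) →ₐ[K] Q}
    {E : (a '' Set.Icc 1 m) → Fin n → Q}
    (hdet : IsUnit (t (Dmat K (a '' Set.Icc 1 m) n (vTup m n a hnm) (vTup m n a hnm))))
    (hE : ∀ p q, t (gen K (a '' Set.Icc 1 m) p q) =
      ∑ i, E p i * t (gen K (a '' Set.Icc 1 m) (vTup m n a hnm i) q))
    {B : Derivation K Q (Derivation K Q Q)}
    (hB : ∀ z z', B (t z) (t z') = t (swapBr K (a '' Set.Icc 1 m) (be - al) (al + be) z z'))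
    (g g' : GIdx m n) :
    B (E (colPoint a g) (rowIndex g)) (E (colPoint a g') (rowIndex g')) =
      ((al - be) * (sEq g.1.1 g.1.2 g'.1.1 g'.1.2 : K)) •
          (E (colPoint a g') (rowIndex g) * E (colPoint a g) (rowIndex g')) +
        ((al + be) * (linkQ (a g.1.1) (a g.1.2) (a g'.1.1) (a g'.1.2) : K)) •
          (E (colPoint a g) (rowIndex g) * E (colPoint a g') (rowIndex g')) := by
  rw [map_Dmat] at hdet
  rw [biderivation_coeff_eq (x := fun p q => t (gen K (a '' Set.Icc 1 m) p q))
    (σ := fun p q => algebraMap K Q (coordSign o p q : ℚ)) (biderivation_map_gen hB o) hdet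
    (hE (colPoint a g)) (hE (colPoint a g'))
    (fun i => by rw [coordSign_colPoint_vTup ho, Rat.cast_one, map_one])
    (fun i => by
      rw [coordSign_swap, coordSign_colPoint_vTup ho, Rat.cast_neg, Rat.cast_one, map_neg, map_one])
    (rowIndex g) (rowIndex g'), sEq_eq_half_coordSign ho hnm, linkQ_eq_half_coordSign ho hnm]
  simp only [Algebra.smul_def]
  push_cast [map_add, map_sub, map_mul, map_neg]
  ring

theorem map_genG_eq [CharZero K] (hnm : n ≤ m) {al be : K} {Q : Type*} [CommRing Q] [Algebra K Q]
    {t : SwapRing K (a '' Set.Icc 1 m) →ₐ[K] Q} {θ : MvPolynomial (GIdx m n) K →ₐ[K] Q}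
    (ht : ∀ z ∈ Rideal K (a '' Set.Icc 1 m) n, t z = 0)
    (hdet : IsUnit (t (Dmat K (a '' Set.Icc 1 m) n (vTup m n a hnm) (vTup m n a hnm))))
    (hθ : ∀ g, θ (X g) * t (Dmat K (a '' Set.Icc 1 m) n (vTup m n a hnm) (vTup m n a hnm)) =
      t (Dmat K (a '' Set.Icc 1 m) n
        (Function.update (vTup m n a hnm) (rowIndex g) (colPoint a g)) (vTup m n a hnm)))
    {B : Derivation K Q (Derivation K Q Q)}
    (hB : ∀ z z', B (t z) (t z') = t (swapBr K (a '' Set.Icc 1 m) (be - al) (al + be) z z'))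
    (g g' : GIdx m n) :
    θ (genG K m n al be a g g') = B (θ (X g)) (θ (X g')) := by
  obtain ⟨E, hE⟩ := exists_map_gen_eq_sum ht hdet
  have hθE (g : GIdx m n) : θ (X g) = E (colPoint a g) (rowIndex g) :=
    eq_of_mul_map_Dmat_eq hdet (hE _) (hθ g)
  rw [hθE g, hθE g', biderivation_map_gen_coeff ho hnm hdet hE hB, genG]
  simp only [map_add, map_smul, map_mul, hθE]
  rfl

end PoissonMap

end Swapping

/-- Let `α, β ∈ K`, `m > n ≥ 2` and let `P = {a_1, …, a_m}` be ordered
anticlockwise on a circle; equip `Q_n(P)` with the `(β-α, α+β)`-swapping bracket.  The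
algebra homomorphism `θ : K[m_{ij} : 1 ≤ i ≤ n < j ≤ m] → Q_n(P)` sending `m_{ij}` to the
determinant quotient `E(a_1, …, a_{i-1}, a_{i+1}, …, a_n | a_j, a_i)` (characterized by
`θ(m_{ij}) · Δ((â_i, a_i), v) = Δ((â_i, a_j), v)`) is injective and Poisson with respect
to `{·,·}_{B_{α,β}}` and the `(β-α, α+β)`-swapping bracket. -/
theorem grassmannian_bracket_to_swapping (K : Type) [Field K] [CharZero K]
    (al be : K) (m n : ℕ) (hn : 2 ≤ n) (hm : n < m) (a : ℕ → Circle1)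
    (hcfg : AnticlockwiseList ((List.range m).map (fun k => a (k+1))))
    (θ : MvPolynomial (GIdx m n) K →ₐ[K] QnRing K (a '' Set.Icc 1 m) n)
    (hθ : ∀ g : GIdx m n,
      θ (MvPolynomial.X g)
          * algebraMap (ZnRing K (a '' Set.Icc 1 m) n) (QnRing K (a '' Set.Icc 1 m) n)
              (toZn K (a '' Set.Icc 1 m) n
                (Dmat K (a '' Set.Icc 1 m) n
                  (hatRows m n a g.1.1 g.1.1 hm g.2.2.1 g.2.1 (le_trans g.2.2.1 hm.le))
                  (vTup m n a hm.le)))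
        = algebraMap (ZnRing K (a '' Set.Icc 1 m) n) (QnRing K (a '' Set.Icc 1 m) n)
            (toZn K (a '' Set.Icc 1 m) n
              (Dmat K (a '' Set.Icc 1 m) n
                (hatRows m n a g.1.1 g.1.2 hm g.2.2.1 (by have := g.2.2.2.1; omega)
                  g.2.2.2.2)
                (vTup m n a hm.le)))) :
    Function.Injective θ ∧
    ∀ Bq : QnRing K (a '' Set.Icc 1 m) n → QnRing K (a '' Set.Icc 1 m) n →
          QnRing K (a '' Set.Icc 1 m) n,
      IsQnBracket K (a '' Set.Icc 1 m) n (be - al) (al + be) Bq →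
      ∀ f g : MvPolynomial (GIdx m n) K,
        θ (brG K m n al be a f g) = Bq (θ f) (θ g) := by
  obtain ⟨o, ho⟩ := Swapping.exists_strictMonoOn_coordAt hcfg
  have ha : Set.InjOn a (Set.Icc 1 m) := fun k hk l hl h =>
    ho.injOn hk hl (congrArg (coordAt o) h)
  have : Finite (a '' Set.Icc 1 m) := ((Set.finite_Icc 1 m).image a).to_subtype
  have hdet := Swapping.isUnit_toQnₐ_Dmat_self (K := K) hn (Swapping.vTup_injective ha hm.le)
  have hθ_eq (g : GIdx m n) := Swapping.mul_Dmat_vTup_eq (a := a)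
    (Swapping.toQnₐ K (a '' Set.Icc 1 m) n) hm g (y := θ (X g)) (hθ g)
  refine ⟨Swapping.injective_of_mul_Dmat_vTup_eq (Q := QnRing K (a '' Set.Icc 1 m) n) hn hm.le ha
    (fun _ => Swapping.toQnₐ_eq_zero_iff.1) hθ_eq, fun Bq hBq f g => ?_⟩
  obtain ⟨B, hB⟩ := Swapping.exists_biderivation_of_isQnBracket hBq
  rw [← hB, brG, ← Swapping.mkDerivation_mkDerivation_apply]
  refine Swapping.map_biderivation_eq_of_X (Q := QnRing K (a '' Set.Icc 1 m) n)
    (fun k l => ?_) f g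
  rw [mkDerivation_X, mkDerivation_X]
  exact Swapping.map_genG_eq (Q := QnRing K (a '' Set.Icc 1 m) n) ho hm.le
    (fun _ => Swapping.toQnₐ_eq_zero_iff.2) hdet hθ_eq
    (fun z z' => (hB _ _).trans (hBq.1 z z')) k l

end
end

section
/- Let n ≥ 2 and let Ω be a nonzero alternating n-form on K^n. Suppose (x_1,…,x_n) and (x'_1,…,x'_n) are bases of K^n spanning the same complete flag, in the sense that x'_1 ∧ … ∧ x'_k = λ_k · (x_1 ∧ … ∧ x_k) for some nonzero scalars λ_k ∈ K, for every k = 1, …, n, and similarly for the pairs (y_i)/(y'_i), (z_i)/(z'_i), and (t_i)/(t'_i). Then the (m,l,p)-triple ratio T^{m,l,p} and the (i,n−i)-edge function B_i computed from the primed bases are equal to those computed from the unprimed bases (whenever all the values of Ω appearing in the denominators are nonzero); that is, the triple ratios and edge functions depend only on the flags and not on the chosen bases. -/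
noncomputable section

/-- The `(m,l,p)`-triple ratio (with `p = n - m - l`):
`T^{m,l,p} = [Ω(x̂^{m+1} ∧ ŷ^l ∧ ẑ^{p-1}) · Ω(x̂^{m-1} ∧ ŷ^{l+1} ∧ ẑ^p) ·
Ω(x̂^m ∧ ŷ^{l-1} ∧ ẑ^{p+1})] / [Ω(x̂^{m+1} ∧ ŷ^{l-1} ∧ ẑ^p) ·
Ω(x̂^m ∧ ŷ^{l+1} ∧ ẑ^{p-1}) · Ω(x̂^{m-1} ∧ ŷ^l ∧ ẑ^{p+1})]`. -/
def tripleRatio (K : Type) [Field K] (n : ℕ)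
    (Om : AlternatingMap K (Fin n → K) K (Fin n)) (x y z : ℕ → (Fin n → K))
    (m l : ℕ) : K :=
  (Om (rows3 x y z (m+1) l) * Om (rows3 x y z (m-1) (l+1)) * Om (rows3 x y z m (l-1)))
    / (Om (rows3 x y z (m+1) (l-1)) * Om (rows3 x y z m (l+1)) * Om (rows3 x y z (m-1) l))

/-- The `(i, n-i)`-edge function:
`B_i = [Ω(x̂^i ∧ ẑ^{n-i-1} ∧ t_1) · Ω(x̂^{i-1} ∧ ẑ^{n-i} ∧ y_1)]
  / [Ω(x̂^i ∧ ẑ^{n-i-1} ∧ y_1) · Ω(x̂^{i-1} ∧ ẑ^{n-i} ∧ t_1)]`. -/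
def edgeFun (K : Type) [Field K] (n : ℕ)
    (Om : AlternatingMap K (Fin n → K) K (Fin n)) (x y z t : ℕ → (Fin n → K))
    (i : ℕ) : K :=
  (Om (rows3 x z t i (n-i-1)) * Om (rows3 x z y (i-1) (n-i)))
    / (Om (rows3 x z y i (n-i-1)) * Om (rows3 x z t (i-1) (n-i)))

/-- The bases `(x_1, …, x_n)` and `(x'_1, …, x'_n)` span the same complete flag:
for every `k = 1, …, n` there is a nonzero scalar `c` with
`x'_1 ∧ … ∧ x'_k = c • (x_1 ∧ … ∧ x_k)` in the exterior algebra. -/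
def SameFlag (K : Type) [Field K] (n : ℕ) (x x' : ℕ → (Fin n → K)) : Prop :=
  ∀ k : ℕ, 1 ≤ k → k ≤ n → ∃ c : K, c ≠ 0 ∧
    ExteriorAlgebra.ιMulti K k (fun i : Fin k => x' (i : ℕ))
      = c • ExteriorAlgebra.ιMulti K k (fun i : Fin k => x (i : ℕ))

/-! Since `x̂^a ∧ ŷ^b ∧ ẑ^d` is a product in the exterior algebra, replacing the bases multiplies
its value under `Ω` by `λ_a μ_b ν_d`, where `λ`, `μ`, `ν` are the scalars relating the partial
wedges of the three pairs of bases. In the triple ratio, and likewise in the edge function, the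
same scalars appear in the numerator and in the denominator. -/

section ExteriorAlgebra

variable {R M N : Type*} [CommRing R] [AddCommGroup M] [Module R M] [AddCommGroup N] [Module R N]

theorem alternatingMap_apply_eq_smul_of_ιMulti_eq_smul {k : ℕ} (f : M [⋀^Fin k]→ₗ[R] N)
    {v v' : Fin k → M} {c : R}
    (h : ExteriorAlgebra.ιMulti R k v' = c • ExteriorAlgebra.ιMulti R k v) :
    f v' = c • f v := by
  have h_lift := congrArg (ExteriorAlgebra.liftAlternating (Pi.single k f)) h
  simpa only [map_smul, ExteriorAlgebra.liftAlternating_apply_ιMulti, Pi.single_eq_same]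
    using h_lift

theorem ιMulti_append {a b : ℕ} (u : Fin a → M) (v : Fin b → M) :
    ExteriorAlgebra.ιMulti R (a + b) (Fin.append u v) =
      ExteriorAlgebra.ιMulti R a u * ExteriorAlgebra.ιMulti R b v := by
  simp only [ExteriorAlgebra.ιMulti_apply, List.ofFn_add, List.prod_append, Fin.append_left',
    Fin.append_right]

variable (R) in
/-- The wedge `x̂^k = x_1 ∧ … ∧ x_k` of the first `k` vectors of a family, as an element of the
exterior algebra; the family is indexed from `0`, as in `rows3`. -/
abbrev partialWedge (x : ℕ → M) (k : ℕ) : ExteriorAlgebra R M :=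
  ExteriorAlgebra.ιMulti R k fun i : Fin k => x i

theorem rows3_eq_append {α : Type*} (x y z : ℕ → α) (a b d : ℕ) :
    (rows3 x y z a b : Fin (a + b + d) → α) =
      Fin.append (Fin.append (fun i : Fin a => x i) fun i : Fin b => y i) fun i : Fin d => z i := by
  funext i
  refine Fin.addCases (fun j => Fin.addCases (fun j => ?_) (fun j => ?_) j) (fun j => ?_) i <;>
    simp [rows3, add_assoc, Nat.add_sub_add_left]

theorem ιMulti_rows3 (x y z : ℕ → M) (a b d : ℕ) :
    ExteriorAlgebra.ιMulti R (a + b + d) (rows3 x y z a b) =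
      partialWedge R x a * partialWedge R y b * partialWedge R z d := by
  rw [rows3_eq_append, ιMulti_append, ιMulti_append]

theorem alternatingMap_rows3_eq_smul {n a b d : ℕ} (Om : M [⋀^Fin n]→ₗ[R] N)
    (habd : a + b + d = n) {x x' y y' z z' : ℕ → M} {α β γ : R}
    (hx : partialWedge R x' a = α • partialWedge R x a)
    (hy : partialWedge R y' b = β • partialWedge R y b)
    (hz : partialWedge R z' d = γ • partialWedge R z d) :
    Om (rows3 x' y' z' a b) = (α * β * γ) • Om (rows3 x y z a b) := by
  subst habd
  apply alternatingMap_apply_eq_smul_of_ιMulti_eq_smul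
  rw [ιMulti_rows3, ιMulti_rows3, hx, hy, hz]
  simp only [smul_mul_smul_comm]

end ExteriorAlgebra

section FlagInvariance

variable {K : Type} [Field K] {n : ℕ} {Om : AlternatingMap K (Fin n → K) K (Fin n)}
  {x x' y y' z z' t t' : ℕ → (Fin n → K)}

theorem SameFlag.exists_partialWedge_eq_smul (h : SameFlag K n x x') :
    ∃ c : ℕ → K, (∀ k, c k ≠ 0) ∧
      ∀ k ≤ n, partialWedge K x' k = c k • partialWedge K x k := by
  have exists_scalar (k : ℕ) :
      ∃ c : K, c ≠ 0 ∧ (k ≤ n → partialWedge K x' k = c • partialWedge K x k) := by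
    by_cases hk : 1 ≤ k ∧ k ≤ n
    · obtain ⟨c, hc, hwedge⟩ := h k hk.1 hk.2
      exact ⟨c, hc, fun _ => hwedge⟩
    · refine ⟨1, one_ne_zero, fun hkn => ?_⟩
      obtain rfl : k = 0 := by omega
      simp
  choose c hc hwedge using exists_scalar
  exact ⟨c, hc, hwedge⟩

theorem tripleRatio_eq_of_sameFlag (hx : SameFlag K n x x') (hy : SameFlag K n y y')
    (hz : SameFlag K n z z') {m l p : ℕ} (hm : 0 < m) (hl : 0 < l) (hp : 0 < p)
    (hmlp : m + l + p = n)
    (hd1 : Om (rows3 x y z (m + 1) (l - 1)) ≠ 0)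
    (hd2 : Om (rows3 x y z m (l + 1)) ≠ 0)
    (hd3 : Om (rows3 x y z (m - 1) l) ≠ 0) :
    tripleRatio K n Om x' y' z' m l = tripleRatio K n Om x y z m l := by
  obtain ⟨cx, hcx, hx⟩ := hx.exists_partialWedge_eq_smul
  obtain ⟨cy, hcy, hy⟩ := hy.exists_partialWedge_eq_smul
  obtain ⟨cz, hcz, hz⟩ := hz.exists_partialWedge_eq_smul
  have scale (a b d : ℕ) (habd : a + b + d = n) :
      Om (rows3 x' y' z' a b) = (cx a * cy b * cz d) * Om (rows3 x y z a b) :=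
    alternatingMap_rows3_eq_smul Om habd (hx a (by omega)) (hy b (by omega)) (hz d (by omega))
  unfold tripleRatio
  rw [scale (m + 1) l (p - 1) (by omega), scale (m - 1) (l + 1) p (by omega),
    scale m (l - 1) (p + 1) (by omega), scale (m + 1) (l - 1) p (by omega),
    scale m (l + 1) (p - 1) (by omega), scale (m - 1) l (p + 1) (by omega),
    div_eq_div_iff (by simp [hcx, hcy, hcz, hd1, hd2, hd3]) (by simp [hd1, hd2, hd3])]
  ring

theorem edgeFun_eq_of_sameFlag (hx : SameFlag K n x x') (hy : SameFlag K n y y')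
    (hz : SameFlag K n z z') (ht : SameFlag K n t t') {i : ℕ} (hi0 : 0 < i) (hin : i < n)
    (hdy : Om (rows3 x z y i (n - i - 1)) ≠ 0)
    (hdt : Om (rows3 x z t (i - 1) (n - i)) ≠ 0) :
    edgeFun K n Om x' y' z' t' i = edgeFun K n Om x y z t i := by
  obtain ⟨cx, hcx, hx⟩ := hx.exists_partialWedge_eq_smul
  obtain ⟨cy, hcy, hy⟩ := hy.exists_partialWedge_eq_smul
  obtain ⟨cz, hcz, hz⟩ := hz.exists_partialWedge_eq_smul
  obtain ⟨ct, hct, ht⟩ := ht.exists_partialWedge_eq_smul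
  have scale_y (a b : ℕ) (hab : a + b + 1 = n) :
      Om (rows3 x' z' y' a b) = (cx a * cz b * cy 1) * Om (rows3 x z y a b) :=
    alternatingMap_rows3_eq_smul Om hab (hx a (by omega)) (hz b (by omega)) (hy 1 (by omega))
  have scale_t (a b : ℕ) (hab : a + b + 1 = n) :
      Om (rows3 x' z' t' a b) = (cx a * cz b * ct 1) * Om (rows3 x z t a b) :=
    alternatingMap_rows3_eq_smul Om hab (hx a (by omega)) (hz b (by omega)) (ht 1 (by omega))
  unfold edgeFun
  rw [scale_t i (n - i - 1) (by omega), scale_y (i - 1) (n - i) (by omega),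
    scale_y i (n - i - 1) (by omega), scale_t (i - 1) (n - i) (by omega),
    div_eq_div_iff (by simp [hcx, hcy, hcz, hct, hdy, hdt]) (by simp [hdy, hdt])]
  ring

end FlagInvariance

theorem triple_ratio_edge_function_flag_invariance_general (K : Type) [Field K] (n : ℕ)
    (Om : AlternatingMap K (Fin n → K) K (Fin n))
    (x x' y y' z z' t t' : ℕ → (Fin n → K))
    (hx : SameFlag K n x x') (hy : SameFlag K n y y')
    (hz : SameFlag K n z z') (ht : SameFlag K n t t')
    (m l p : ℕ) (hm : 0 < m) (hl : 0 < l) (hp : 0 < p) (hmlp : m + l + p = n)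
    (i : ℕ) (hi0 : 0 < i) (hin : i < n)
    (hd1 : Om (rows3 x y z (m + 1) (l - 1)) ≠ 0)
    (hd2 : Om (rows3 x y z m (l + 1)) ≠ 0)
    (hd3 : Om (rows3 x y z (m - 1) l) ≠ 0)
    (hd4 : Om (rows3 x z y i (n - i - 1)) ≠ 0)
    (hd5 : Om (rows3 x z t (i - 1) (n - i)) ≠ 0) :
    tripleRatio K n Om x' y' z' m l = tripleRatio K n Om x y z m l ∧
    edgeFun K n Om x' y' z' t' i = edgeFun K n Om x y z t i :=
  ⟨tripleRatio_eq_of_sameFlag hx hy hz hm hl hp hmlp hd1 hd2 hd3,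
    edgeFun_eq_of_sameFlag hx hy hz ht hi0 hin hd4 hd5⟩

/-- If the primed bases span the same complete flags as the unprimed
ones (for each of the four families), then the `(m,l,p)`-triple ratio and the
`(i,n-i)`-edge function computed from the primed bases equal those computed from the
unprimed bases (whenever all the values of `Ω` appearing in the denominators are
nonzero): the triple ratios and the edge functions depend only on the flags. -/
theorem triple_ratio_edge_function_flag_invariance (K : Type) [Field K] [CharZero K]
    (n : ℕ) (hn : 2 ≤ n)
    (Om : AlternatingMap K (Fin n → K) K (Fin n)) (hOm : Om ≠ 0)
    (x x' y y' z z' t t' : ℕ → (Fin n → K))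
    (hx : SameFlag K n x x') (hy : SameFlag K n y y')
    (hz : SameFlag K n z z') (ht : SameFlag K n t t')
    (m l p : ℕ) (hm : 0 < m) (hl : 0 < l) (hp : 0 < p) (hmlp : m + l + p = n)
    (i : ℕ) (hi0 : 0 < i) (hin : i < n)
    (hd1 : Om (rows3 x y z (m+1) (l-1)) ≠ 0)
    (hd2 : Om (rows3 x y z m (l+1)) ≠ 0)
    (hd3 : Om (rows3 x y z (m-1) l) ≠ 0)
    (hd4 : Om (rows3 x z y i (n-i-1)) ≠ 0)
    (hd5 : Om (rows3 x z t (i-1) (n-i)) ≠ 0) :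
    tripleRatio K n Om x' y' z' m l = tripleRatio K n Om x y z m l ∧
    edgeFun K n Om x' y' z' t' i = edgeFun K n Om x y z t i := by
  exact triple_ratio_edge_function_flag_invariance_general K n Om x x' y y' z z' t t'
    hx hy hz ht m l p hm hl hp hmlp i hi0 hin hd1 hd2 hd3 hd4 hd5

end
end
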